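/- (Theorem 3.4) Let n ≥ 2 and α ≥ 0. The trace order of the family F_α satisfies ord F_α ≤ (1/2)(n+1)·( (1/2)·√(n+1)·α + √(1 + (1/4)(n+1)α² + C(n,α)) ), where C(n,α) = (4n² + 2n − 2 + (n+1)/(n−1))·α² + (4√(n+1) + 8√(n+1)/(n−1))·α. -/

import Mathlib

open scoped BigOperators

noncomputable section

/-- Partial derivative `∂f/∂z_i` of a scalar-valued holomorphic function on `ℂⁿ`. -/
def pd (n : ℕ) (i : Fin n) (f : (Fin n → ℂ) → ℂ) (z : Fin n → ℂ) : ℂ :=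
  fderiv ℂ f z (Pi.single i 1)

/-- Second partial derivative `∂²f/∂z_i∂z_j`. -/
def pd2 (n : ℕ) (i j : Fin n) (f : (Fin n → ℂ) → ℂ) (z : Fin n → ℂ) : ℂ :=
  pd n i (fun w => pd n j f w) z

/-- Complex Jacobian matrix `DF`. -/
def Jac (n : ℕ) (F : (Fin n → ℂ) → (Fin n → ℂ)) (z : Fin n → ℂ) :
    Matrix (Fin n) (Fin n) ℂ :=
  Matrix.of fun i j => pd n j (fun w => F w i) z

/-- Jacobian determinant `JF = det DF`. -/
def JDet (n : ℕ) (F : (Fin n → ℂ) → (Fin n → ℂ)) (z : Fin n → ℂ) : ℂ :=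
  (Jac n F z).det

/-- Oda's Schwarzian derivative `S^k_{ij}F`; the derivative of `log JF` is expressed
by the logarithmic derivative `(∂JF/∂z)/JF`, which is the derivative of any local
branch of the logarithm. -/
def oSchw (n : ℕ) (F : (Fin n → ℂ) → (Fin n → ℂ)) (i j k : Fin n) (z : Fin n → ℂ) : ℂ :=
  (∑ l, pd2 n i j (fun w => F w l) z * (Jac n F z)⁻¹ k l)
    - (1 / ((n : ℂ) + 1)) *
        ((if k = i then 1 else 0) * (pd n j (JDet n F) z / JDet n F z)
          + (if k = j then 1 else 0) * (pd n i (JDet n F) z / JDet n F z))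

/-- `S⁰_{ij}F`, defined through a local branch `u₀` of `(JF)^{-1/(n+1)}`. -/
def oS0 (n : ℕ) (F : (Fin n → ℂ) → (Fin n → ℂ)) (u₀ : (Fin n → ℂ) → ℂ)
    (i j : Fin n) (z : Fin n → ℂ) : ℂ :=
  (u₀ z)⁻¹ * (pd2 n i j u₀ z - ∑ k, oSchw n F i j k z * pd n k u₀ z)

/-- Euclidean norm on `ℂⁿ`. -/
def euclNorm (n : ℕ) (v : Fin n → ℂ) : ℝ := Real.sqrt (∑ i, ‖v i‖ ^ 2)

/-- Euclidean open unit ball `Bⁿ ⊆ ℂⁿ`. -/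
def eball (n : ℕ) : Set (Fin n → ℂ) := {z | euclNorm n z < 1}

/-- A biholomorphic automorphism of the unit ball: a holomorphic bijection of `Bⁿ`
onto itself with holomorphic inverse. -/
def IsAutB (n : ℕ) (σ : (Fin n → ℂ) → (Fin n → ℂ)) : Prop :=
  DifferentiableOn ℂ σ (eball n) ∧ Set.BijOn σ (eball n) (eball n) ∧
    ∃ τ : (Fin n → ℂ) → (Fin n → ℂ), DifferentiableOn ℂ τ (eball n) ∧
      (∀ z ∈ eball n, τ (σ z) = z) ∧ (∀ w ∈ eball n, σ (τ w) = w)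

/-- The automorphism of `Bⁿ` with `σ(0) = (ζ₁,0,…,0)` used in Lemma 3.2. -/
def sigmaA (n : ℕ) [NeZero n] (ζ : ℂ) (z : Fin n → ℂ) : Fin n → ℂ := fun i =>
  if i = 0 then (z 0 + ζ) / (1 + (starRingEnd ℂ) ζ * z 0)
  else ((Real.sqrt (1 - ‖ζ‖ ^ 2) : ℂ) * z i) / (1 + (starRingEnd ℂ) ζ * z 0)

/-- The Koebe transform `G(z) = Dσ(0)⁻¹ DF₀(σ(0))⁻¹ (F₀(σ(z)) − F₀(σ(0)))`. -/
def Koebe (n : ℕ) (F₀ σ : (Fin n → ℂ) → (Fin n → ℂ)) (z : Fin n → ℂ) : Fin n → ℂ :=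
  Matrix.mulVec ((Jac n σ 0)⁻¹ * (Jac n F₀ (σ 0))⁻¹) (F₀ (σ z) - F₀ (σ 0))

/-- The conjugation `G(z) = U⁻¹·F₀(U·z)` of `F₀` by a unitary matrix `U`. -/
def unitKoebe (n : ℕ) (F₀ : (Fin n → ℂ) → (Fin n → ℂ)) (U : Matrix (Fin n) (Fin n) ℂ)
    (z : Fin n → ℂ) : Fin n → ℂ :=
  Matrix.mulVec U⁻¹ (F₀ (Matrix.mulVec U z))

/-- The Schwarzian derivative operator `SF(z)(v) = (vᵗ𝕊¹F(z)v, …, vᵗ𝕊ⁿF(z)v)`. -/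
def SchwOp (n : ℕ) (F : (Fin n → ℂ) → (Fin n → ℂ)) (z v : Fin n → ℂ) : Fin n → ℂ :=
  fun k => ∑ i, ∑ j, v i * oSchw n F i j k z * v j

/-- The squared Bergman norm `‖v‖_z² = Σ_{i,j} g_{ij}(z) v_i conj(v_j)` on `Bⁿ`. -/
def bergSq (n : ℕ) (z v : Fin n → ℂ) : ℝ :=
  (∑ i, ∑ j, (((n : ℂ) + 1) / (((1 - (euclNorm n z) ^ 2 : ℝ) : ℂ)) ^ 2) *
      ((if i = j then ((1 - (euclNorm n z) ^ 2 : ℝ) : ℂ) else 0)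
        + (starRingEnd ℂ) (z i) * z j) * v i * (starRingEnd ℂ) (v j)).re

/-- Membership in the linearly invariant family `F_α`. -/
def memF (n : ℕ) (α : ℝ) (F : (Fin n → ℂ) → (Fin n → ℂ)) : Prop :=
  DifferentiableOn ℂ F (eball n) ∧ (∀ z ∈ eball n, JDet n F z ≠ 0) ∧
    F 0 = 0 ∧ Jac n F 0 = 1 ∧
    ∀ z ∈ eball n, ∀ v : Fin n → ℂ, bergSq n z v = 1 →
      Real.sqrt (bergSq n z (SchwOp n F z v)) ≤ α

/- Oda's Schwarzian `S` is the trace-free part of the flat connection that `F` pulls back from `ℂⁿ`.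
Flatness turns into an equation expressing `∇ω + ω ⊗ ω - ω ∘ S` through `S` and its divergence,
where `ω` is the normalised trace of the connection, and Cauchy's estimate bounds the right-hand
side at the origin. The Lorentz norm of the dual of `ω`, suitably scaled, is an energy invariant
under automorphisms of the ball, and after a dilation it vanishes on the sphere, so its supremum is
attained; an automorphism moves the maximum to the origin. There the first-order condition and the
equation for `∇ω` give `‖ω‖² - 1 ≤ K ‖ω‖ + C`, hence a bound for `ω`, and at the origin the trace
order is `(n + 1) / 2` times the norm of `ω`. -/

section

open Set Filter Topology
open Metric hiding eball
open scoped InnerProductSpace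

section Holomorphic

theorem add_mem_closedBall_of_mem_closedBall {E : Type*} [SeminormedAddCommGroup E]
    {x y p : E} {s ρ : ℝ} (hy : y ∈ closedBall x ρ) (hp : ‖p‖ ≤ s) :
    y + p ∈ closedBall x (s + ρ) := by
  rw [mem_closedBall_iff_norm] at hy ⊢
  calc ‖y + p - x‖ = ‖p + (y - x)‖ := by congr 1; abel
    _ ≤ s + ρ := norm_add_le_of_le hp hy

variable {E H : Type*} [NormedAddCommGroup E] [NormedSpace ℂ E]
  [NormedAddCommGroup H] [NormedSpace ℂ H]

theorem hasDerivAt_comp_add_smul {f : E → H} {x v : E} {t : ℂ}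
    (hf : DifferentiableAt ℂ f (x + t • v)) :
    HasDerivAt (fun s : ℂ => f (x + s • v)) (fderiv ℂ f (x + t • v) v) t := by
  have hline : HasDerivAt (fun s : ℂ => x + s • v) v t := by
    simpa using ((hasDerivAt_id t).smul_const v).const_add x
  exact hf.hasFDerivAt.comp_hasDerivAt t hline

theorem norm_fderiv_le_div_of_forall_mem_closedBall {f : E → H} {x : E} {ρ M : ℝ} (hρ : 0 < ρ)
    (hf : ∀ y ∈ closedBall x ρ, DifferentiableAt ℂ f y) (hM : ∀ y ∈ closedBall x ρ, ‖f y‖ ≤ M) :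
    ‖fderiv ℂ f x‖ ≤ M / ρ := by
  have hM₀ : 0 ≤ M := (norm_nonneg _).trans (hM x (mem_closedBall_self hρ.le))
  refine ContinuousLinearMap.opNorm_le_bound _ (by positivity) fun v => ?_
  rcases eq_or_ne v 0 with rfl | hv
  · simp
  have hv' : 0 < ‖v‖ := norm_pos_iff.mpr hv
  have hmem : ∀ t ∈ closedBall (0 : ℂ) (ρ / ‖v‖), x + t • v ∈ closedBall x ρ := by
    intro t ht
    rw [mem_closedBall_iff_norm, add_sub_cancel_left, norm_smul]
    exact (le_div_iff₀ hv').mp (mem_closedBall_zero_iff.mp ht)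
  have hderiv : ∀ t ∈ closedBall (0 : ℂ) (ρ / ‖v‖),
      HasDerivAt (fun s : ℂ => f (x + s • v)) (fderiv ℂ f (x + t • v) v) t :=
    fun t ht => hasDerivAt_comp_add_smul (hf _ (hmem t ht))
  have hderiv₀ : deriv (fun s : ℂ => f (x + s • v)) 0 = fderiv ℂ f x v := by
    simpa using (hderiv 0 (mem_closedBall_self (by positivity))).deriv
  calc ‖fderiv ℂ f x v‖ = ‖deriv (fun s : ℂ => f (x + s • v)) 0‖ := by rw [hderiv₀]
    _ ≤ M / (ρ / ‖v‖) := by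
      refine Complex.norm_deriv_le_of_forall_mem_sphere_norm_le (by positivity)
        (DifferentiableOn.diffContOnCl fun t ht => ?_)
        fun t ht => hM _ (hmem t (sphere_subset_closedBall ht))
      exact (hderiv t (closure_ball_subset_closedBall ht)).differentiableAt.differentiableWithinAt
    _ = M / ρ * ‖v‖ := by field_simp

theorem fderiv_apply_eq_cderiv [CompleteSpace H] {f : E → H} {U : Set E} (hU : IsOpen U)
    (hf : DifferentiableOn ℂ f U) {x v : E} {r : ℝ} (hr : 0 < r)
    (hxv : ∀ t ∈ closedBall (0 : ℂ) r, x + t • v ∈ U) :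
    fderiv ℂ f x v = Complex.cderiv r (fun t => f (x + t • v)) 0 := by
  have hderiv : ∀ t : ℂ, x + t • v ∈ U →
      HasDerivAt (fun s : ℂ => f (x + s • v)) (fderiv ℂ f (x + t • v) v) t :=
    fun t ht => hasDerivAt_comp_add_smul (hf.differentiableAt (hU.mem_nhds ht))
  have hopen : IsOpen {t : ℂ | x + t • v ∈ U} := hU.preimage (by fun_prop)
  rw [Complex.cderiv_eq_deriv hopen
    (fun t ht => (hderiv t ht).differentiableAt.differentiableWithinAt) hr hxv]
  simpa using (hderiv 0 (hxv 0 (mem_closedBall_self hr.le))).deriv.symm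

variable [FiniteDimensional ℂ E] [FiniteDimensional ℂ H]

theorem differentiableAt_intervalIntegral_smul_comp_add {f : E → H} {w : ℝ → ℂ} {p : ℝ → E}
    {a b s ρ N : ℝ} {x : E} (hρ : 0 < ρ) (hw : Continuous w) (hN : ∀ θ, ‖w θ‖ ≤ N)
    (hp : Continuous p) (hs : ∀ θ, ‖p θ‖ ≤ s)
    (hf : ∀ y ∈ closedBall x (s + 2 * ρ), DifferentiableAt ℂ f y) :
    DifferentiableAt ℂ (fun y => ∫ θ in a..b, w θ • f (y + p θ)) x := by
  have := FiniteDimensional.proper ℂ E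
  have := FiniteDimensional.proper ℂ (E →L[ℂ] H)
  have : CompleteSpace H := FiniteDimensional.complete ℂ H
  borelize E H (E →L[ℂ] H)
  obtain ⟨M, hM⟩ := (isCompact_closedBall x (s + 2 * ρ)).exists_bound_of_continuousOn
    fun y hy => (hf y hy).continuousAt.continuousWithinAt
  have hball : ∀ y ∈ ball x ρ, ∀ θ, closedBall (y + p θ) ρ ⊆ closedBall x (s + 2 * ρ) := by
    intro y hy θ
    have := mem_closedBall.mp
      (add_mem_closedBall_of_mem_closedBall (ball_subset_closedBall hy) (hs θ))
    exact closedBall_subset_closedBall' (by linarith)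
  have hf' : ∀ y ∈ ball x ρ, ∀ θ, DifferentiableAt ℂ f (y + p θ) :=
    fun y hy θ => hf _ (hball y hy θ (mem_closedBall_self hρ.le))
  have hcont : ∀ y ∈ ball x ρ, Continuous fun θ => w θ • f (y + p θ) :=
    fun y hy => hw.smul <| continuous_iff_continuousAt.mpr fun θ =>
      (hf' y hy θ).continuousAt.comp (f := fun θ => y + p θ) (by fun_prop)
  have hderiv : ∀ θ, ∀ y ∈ ball x ρ, HasFDerivAt (fun y => w θ • f (y + p θ))
      (w θ • fderiv ℂ f (y + p θ)) y := fun θ y hy =>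
    ((hasFDerivAt_comp_add_right _).mpr (hf' y hy θ).hasFDerivAt).const_smul _
  have hbound : ∀ θ, ∀ y ∈ ball x ρ, ‖w θ • fderiv ℂ f (y + p θ)‖ ≤ N * (M / ρ) := by
    intro θ y hy
    rw [norm_smul]
    exact mul_le_mul (hN θ) (norm_fderiv_le_div_of_forall_mem_closedBall hρ
      (fun z hz => hf z (hball y hy θ hz)) fun z hz => hM z (hball y hy θ hz))
      (norm_nonneg _) ((norm_nonneg _).trans (hN θ))
  exact (intervalIntegral.hasFDerivAt_integral_of_dominated_of_fderiv_le (ball_mem_nhds x hρ)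
    (eventually_of_mem (ball_mem_nhds x hρ) fun y hy => (hcont y hy).aestronglyMeasurable)
    ((hcont x (mem_ball_self hρ)).intervalIntegrable _ _)
    (hw.aestronglyMeasurable.smul ((measurable_fderiv ℂ f).comp
      (by fun_prop : Continuous fun θ => x + p θ).measurable).aestronglyMeasurable)
    (Eventually.of_forall fun θ _ => hbound θ) (by simp)
    (Eventually.of_forall fun θ _ => hderiv θ)).differentiableAt

theorem differentiableAt_circleIntegral_smul_comp_add_smul {f : E → H} {k : ℂ → ℂ} {x v : E}
    {r ρ : ℝ} (hr : 0 ≤ r) (hρ : 0 < ρ) (hk : ContinuousOn k (sphere 0 r))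
    (hf : ∀ y ∈ closedBall x (r * ‖v‖ + 2 * ρ), DifferentiableAt ℂ f y) :
    DifferentiableAt ℂ (fun y => ∮ t in C(0, r), k t • f (y + t • v)) x := by
  have hsphere : ∀ θ, circleMap 0 r θ ∈ sphere (0 : ℂ) r := circleMap_mem_sphere 0 hr
  obtain ⟨N, hN⟩ := (isCompact_sphere (0 : ℂ) r).exists_bound_of_continuousOn hk
  have hw : Continuous fun θ => deriv (circleMap 0 r) θ * k (circleMap 0 r θ) := by
    simp only [deriv_circleMap]
    exact ((continuous_circleMap 0 r).mul_const _).mul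
      (hk.comp_continuous (continuous_circleMap 0 r) hsphere)
  have hwN : ∀ θ, ‖deriv (circleMap 0 r) θ * k (circleMap 0 r θ)‖ ≤ r * N := by
    intro θ
    have hnorm : ‖deriv (circleMap 0 r) θ‖ = r := by simp [deriv_circleMap, abs_of_nonneg hr]
    rw [norm_mul, hnorm]
    exact mul_le_mul_of_nonneg_left (hN _ (hsphere θ)) hr
  simp only [circleIntegral, smul_smul]
  refine differentiableAt_intervalIntegral_smul_comp_add hρ hw hwN
    ((continuous_circleMap 0 r).smul continuous_const) (fun θ => ?_) hf
  rw [norm_smul, mem_sphere_zero_iff_norm.mp (hsphere θ)]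

theorem differentiableOn_fderiv_apply {f : E → H} {U : Set E} (hU : IsOpen U)
    (hf : DifferentiableOn ℂ f U) (v : E) : DifferentiableOn ℂ (fun x => fderiv ℂ f x v) U := by
  intro x hx
  have : CompleteSpace H := FiniteDimensional.complete ℂ H
  obtain ⟨ε, hε, hεU⟩ := nhds_basis_closedBall.mem_iff.mp (hU.mem_nhds hx)
  obtain ⟨r, hr, hrv⟩ : ∃ r > 0, r * ‖v‖ ≤ ε / 3 := by
    refine ⟨ε / 3 / (‖v‖ + 1), by positivity, ?_⟩
    rw [div_mul_eq_mul_div, div_le_iff₀ (by positivity)]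
    nlinarith [norm_nonneg v]
  have hsub : closedBall x (r * ‖v‖ + 2 * (ε / 3)) ⊆ U :=
    (closedBall_subset_closedBall (by linarith)).trans hεU
  have hcauchy : (fun y => fderiv ℂ f y v) =ᶠ[𝓝 x]
      fun y => Complex.cderiv r (fun t => f (y + t • v)) 0 := by
    filter_upwards [ball_mem_nhds x (by positivity : 0 < ε / 3)] with y hy
    refine fderiv_apply_eq_cderiv hU hf hr fun t ht => hsub ?_
    have htv : ‖t • v‖ ≤ r * ‖v‖ := by
      rw [norm_smul]
      exact mul_le_mul_of_nonneg_right (mem_closedBall_zero_iff.mp ht) (norm_nonneg v)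
    exact closedBall_subset_closedBall (by linarith)
      (add_mem_closedBall_of_mem_closedBall (ball_subset_closedBall hy) htv)
  have hk : ContinuousOn (fun t : ℂ => ((t - 0) ^ 2)⁻¹) (sphere 0 r) :=
    ContinuousOn.inv₀ (by fun_prop) fun t ht =>
      pow_ne_zero 2 (sub_ne_zero.mpr (ne_of_mem_sphere ht hr.ne'))
  exact ((differentiableAt_circleIntegral_smul_comp_add_smul hr.le (by positivity) hk
    fun y hy => hf.differentiableAt (hU.mem_nhds (hsub hy))).const_smul
      ((2 * Real.pi * Complex.I : ℂ)⁻¹)).congr_of_eventuallyEq hcauchy |>.differentiableWithinAt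

theorem contDiffOn_of_differentiableOn_complex {f : E → H} {U : Set E} (hU : IsOpen U)
    (hf : DifferentiableOn ℂ f U) (k : ℕ) : ContDiffOn ℂ k f U := by
  induction k generalizing f with
  | zero => exact contDiffOn_zero.mpr hf.continuousOn
  | succ k ih =>
    exact (contDiffOn_succ_iff_fderiv_of_isOpen hU).mpr
      ⟨hf, fun h => absurd h (WithTop.natCast_ne_top k),
        contDiffOn_clm_apply.mpr fun v => ih (differentiableOn_fderiv_apply hU hf v)⟩

end Holomorphic

theorem isInvertible_of_forall_eq_zero {𝕜 E : Type*} [NontriviallyNormedField 𝕜]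
    [CompleteSpace 𝕜] [NormedAddCommGroup E] [NormedSpace 𝕜 E] [FiniteDimensional 𝕜 E]
    {A : E →L[𝕜] E} (hA : ∀ v, A v = 0 → v = 0) : A.IsInvertible :=
  ⟨(LinearEquiv.ofInjectiveEndo _
    (LinearMap.ker_eq_bot.mp (LinearMap.ker_eq_bot'.mpr hA))).toContinuousLinearEquiv, by ext; rfl⟩

section Connection

variable (𝕜 : Type*) [RCLike 𝕜] {E H : Type*} [NormedAddCommGroup E] [NormedSpace 𝕜 E]
  [NormedAddCommGroup H] [NormedSpace 𝕜 H] {F : E → H} {z : E}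

/-- The Christoffel symbols of the flat connection that `F` pulls back from the target:
`christoffel 𝕜 F z u v = DF(z)⁻¹ (D²F(z)(u, v))`. -/
def christoffel (F : E → H) (z : E) : E →L[𝕜] E →L[𝕜] E :=
  ContinuousLinearMap.compL 𝕜 E H E (fderiv 𝕜 F z).inverse ∘L fderiv 𝕜 (fderiv 𝕜 F) z

theorem christoffel_apply (F : E → H) (z u v : E) : christoffel 𝕜 F z u v =
    (fderiv 𝕜 F z).inverse (fderiv 𝕜 (fderiv 𝕜 F) z u v) := rfl

variable {𝕜}

theorem fderiv_christoffel_apply (hz : (fderiv 𝕜 F z).IsInvertible) (u v : E) :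
    fderiv 𝕜 F z (christoffel 𝕜 F z u v) = fderiv 𝕜 (fderiv 𝕜 F) z u v :=
  hz.self_apply_inverse _

theorem christoffel_comm (hF : ContDiffAt 𝕜 2 F z) (u v : E) :
    christoffel 𝕜 F z u v = christoffel 𝕜 F z v u :=
  congr_arg (fderiv 𝕜 F z).inverse ((hF.isSymmSndFDerivAt (by simp)).eq u v)

theorem eventuallyEq_christoffel_comm (hF : ContDiffAt 𝕜 2 F z) (u v : E) :
    (fun x => christoffel 𝕜 F x u v) =ᶠ[𝓝 z] fun x => christoffel 𝕜 F x v u :=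
  (hF.eventually (by simp)).mono fun _ hx => christoffel_comm hx u v

theorem fderiv_apply_apply {B : E → E →L[𝕜] E →L[𝕜] H} (hB : DifferentiableAt 𝕜 B z) (a u v : E) :
    fderiv 𝕜 (fun x => B x u v) z a = fderiv 𝕜 B z a u v := by
  simp [((hB.hasFDerivAt.clm_apply (hasFDerivAt_const u z)).clm_apply
    (hasFDerivAt_const v z)).fderiv]

theorem eventually_isInvertible_fderiv [CompleteSpace E] (hF : ContDiffAt 𝕜 1 F z)
    (hz : (fderiv 𝕜 F z).IsInvertible) : ∀ᶠ x in 𝓝 z, (fderiv 𝕜 F x).IsInvertible := by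
  obtain ⟨e, he⟩ := hz
  have hcont : ContinuousAt (fderiv 𝕜 F) z := hF.continuousAt_fderiv (by simp)
  exact hcont.eventually (he ▸ e.nhds)

theorem contDiffAt_christoffel [CompleteSpace E] {k : WithTop ℕ∞}
    (hF : ContDiffAt 𝕜 (k + 2) F z) (hz : (fderiv 𝕜 F z).IsInvertible) :
    ContDiffAt 𝕜 k (christoffel 𝕜 F) z := by
  have hDF : ContDiffAt 𝕜 (k + 1) (fderiv 𝕜 F) z :=
    hF.fderiv_right (by rw [add_assoc, one_add_one_eq_two])
  have hinv : ContDiffAt 𝕜 k (fun x => (fderiv 𝕜 F x).inverse) z :=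
    hz.contDiffAt_map_inverse.comp z (hDF.of_le le_self_add)
  exact ((ContinuousLinearMap.compL 𝕜 E H E).contDiff.contDiffAt.comp z hinv).clm_comp
    (hDF.fderiv_right le_rfl)

/- The connection is the pull-back of the flat one; its curvature vanishes because the third
derivative of `F` is symmetric. -/
theorem fderiv_christoffel_add_christoffel_comm [CompleteSpace E] (hF : ContDiffAt 𝕜 3 F z)
    (hz : (fderiv 𝕜 F z).IsInvertible) (a u v : E) :
    fderiv 𝕜 (christoffel 𝕜 F) z a u v + christoffel 𝕜 F z a (christoffel 𝕜 F z u v) =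
      fderiv 𝕜 (christoffel 𝕜 F) z u a v + christoffel 𝕜 F z u (christoffel 𝕜 F z a v) := by
  have hDF : ContDiffAt 𝕜 2 (fderiv 𝕜 F) z := hF.fderiv_right (by norm_num)
  have hΓ : DifferentiableAt 𝕜 (christoffel 𝕜 F) z :=
    (contDiffAt_christoffel (k := 1) (by norm_num; exact hF) hz).differentiableAt (by simp)
  have hthird : ∀ b c, fderiv 𝕜 (fderiv 𝕜 (fderiv 𝕜 F)) z b c v =
      fderiv 𝕜 F z (fderiv 𝕜 (christoffel 𝕜 F) z b c v +
        christoffel 𝕜 F z b (christoffel 𝕜 F z c v)) := by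
    intro b c
    have hD2 : (fun x => fderiv 𝕜 (fderiv 𝕜 F) x c v) =ᶠ[𝓝 z]
        fun x => fderiv 𝕜 F x (christoffel 𝕜 F x c v) := by
      filter_upwards [eventually_isInvertible_fderiv (hF.of_le (by norm_num)) hz] with x hx
      exact (fderiv_christoffel_apply hx c v).symm
    have hleft : HasFDerivAt (fun x => fderiv 𝕜 (fderiv 𝕜 F) x c v) _ z :=
      (((hDF.fderiv_right (m := 1) (by norm_num)).differentiableAt (by simp)).hasFDerivAt.clm_apply
        (hasFDerivAt_const c z)).clm_apply (hasFDerivAt_const v z)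
    have hright : HasFDerivAt (fun x => fderiv 𝕜 F x (christoffel 𝕜 F x c v)) _ z :=
      (hDF.differentiableAt (by simp)).hasFDerivAt.clm_apply
        ((hΓ.hasFDerivAt.clm_apply (hasFDerivAt_const c z)).clm_apply (hasFDerivAt_const v z))
    have := DFunLike.congr_fun (hleft.unique (hright.congr_of_eventuallyEq hD2)) b
    simpa [fderiv_christoffel_apply hz] using this
  have hsymm := DFunLike.congr_fun ((hDF.isSymmSndFDerivAt (by simp)).eq a u) v
  rw [hthird, hthird] at hsymm
  exact hz.injective hsymm

end Connection

section Trace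

variable (𝕜 E : Type*) [RCLike 𝕜] [NormedAddCommGroup E] [NormedSpace 𝕜 E]
    [FiniteDimensional 𝕜 E]

/-- The trace of continuous endomorphisms, as a continuous linear form. -/
def clmTrace : (E →L[𝕜] E) →L[𝕜] 𝕜 :=
  LinearMap.toContinuousLinearMap (LinearMap.trace 𝕜 E ∘ₗ ContinuousLinearMap.coeLM 𝕜)

variable {𝕜 E}

theorem clmTrace_apply (A : E →L[𝕜] E) : clmTrace 𝕜 E A = LinearMap.trace 𝕜 E A := rfl

theorem clmTrace_id :
    clmTrace 𝕜 E (ContinuousLinearMap.id 𝕜 E) = Module.finrank 𝕜 E :=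
  LinearMap.trace_id 𝕜 E

theorem clmTrace_smulRight (ℓ : E →L[𝕜] 𝕜) (u : E) : clmTrace 𝕜 E (ℓ.smulRight u) = ℓ u :=
  LinearMap.trace_smulRight (ℓ : E →ₗ[𝕜] 𝕜) u

theorem clmTrace_comp_comm (A B : E →L[𝕜] E) :
    clmTrace 𝕜 E (A ∘L B) = clmTrace 𝕜 E (B ∘L A) :=
  LinearMap.trace_mul_comm 𝕜 (A : E →ₗ[𝕜] E) B

theorem clmTrace_inverse_comp_comp {E' : Type*} [NormedAddCommGroup E'] [NormedSpace 𝕜 E']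
    [FiniteDimensional 𝕜 E'] {P : E →L[𝕜] E'} (hP : P.IsInvertible) (A : E' →L[𝕜] E') :
    clmTrace 𝕜 E (P.inverse ∘L A ∘L P) = clmTrace 𝕜 E' A := by
  obtain ⟨e, rfl⟩ := hP
  rw [ContinuousLinearMap.inverse_equiv]
  exact LinearMap.trace_conj' (A : E' →ₗ[𝕜] E') e.symm.toLinearEquiv

end Trace

section Schwarzian

variable (𝕜 : Type*) [RCLike 𝕜] {E H : Type*} [NormedAddCommGroup E] [NormedSpace 𝕜 E]
  [FiniteDimensional 𝕜 E] [NormedAddCommGroup H] [NormedSpace 𝕜 H] {F : E → H} {z : E}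

/-- The divergence of a vector field, i.e. the trace of its derivative. -/
def divergence (V : E → E) (z : E) : 𝕜 := clmTrace 𝕜 E (fderiv 𝕜 V z)

/-- The normalised trace `-(n + 1)⁻¹ tr Γ` of the Christoffel symbols; it is the differential of
`log (JF)^(-1/(n+1))`. -/
def traceForm (F : E → H) (z : E) : E →L[𝕜] 𝕜 :=
  -((Module.finrank 𝕜 E : 𝕜) + 1)⁻¹ • (clmTrace 𝕜 E ∘L christoffel 𝕜 F z)

/-- Oda's Schwarzian derivative of `F`: the trace-free part of the Christoffel symbols, as a
vector-valued bilinear map. -/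
def schwarzian (F : E → H) (z : E) : E →L[𝕜] E →L[𝕜] E :=
  christoffel 𝕜 F z + (traceForm 𝕜 F z).smulRight (ContinuousLinearMap.id 𝕜 E) +
    ((traceForm 𝕜 F z).smulRight (ContinuousLinearMap.id 𝕜 E)).flip

theorem schwarzian_apply (F : E → H) (z u v : E) : schwarzian 𝕜 F z u v =
    christoffel 𝕜 F z u v + traceForm 𝕜 F z u • v + traceForm 𝕜 F z v • u := by
  simp [schwarzian]

theorem christoffel_eq_schwarzian_sub (F : E → H) (z u : E) : christoffel 𝕜 F z u =
    schwarzian 𝕜 F z u - traceForm 𝕜 F z u • ContinuousLinearMap.id 𝕜 E -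
      (traceForm 𝕜 F z).smulRight u := by
  ext v
  simp only [schwarzian_apply, sub_apply, smul_apply,
    ContinuousLinearMap.id_apply, ContinuousLinearMap.smulRight_apply]
  abel

theorem clmTrace_christoffel (F : E → H) (z v : E) : clmTrace 𝕜 E (christoffel 𝕜 F z v) =
    -(Module.finrank 𝕜 E + 1) * traceForm 𝕜 F z v := by
  have : (Module.finrank 𝕜 E : 𝕜) + 1 ≠ 0 := Nat.cast_add_one_ne_zero _
  simp only [traceForm, smul_apply, ContinuousLinearMap.comp_apply, smul_eq_mul]
  field_simp

theorem clmTrace_schwarzian (F : E → H) (z v : E) :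
    clmTrace 𝕜 E (schwarzian 𝕜 F z v) = 0 := by
  have h := congr_arg (clmTrace 𝕜 E) (christoffel_eq_schwarzian_sub 𝕜 F z v)
  rw [clmTrace_christoffel, map_sub, map_sub, map_smul, clmTrace_id, clmTrace_smulRight] at h
  linear_combination -h

variable {𝕜}

theorem schwarzian_comm (hF : ContDiffAt 𝕜 2 F z) (u v : E) :
    schwarzian 𝕜 F z u v = schwarzian 𝕜 F z v u := by
  rw [schwarzian_apply, schwarzian_apply, christoffel_comm hF u v, add_right_comm]

theorem contDiffAt_traceForm {k : WithTop ℕ∞} (hF : ContDiffAt 𝕜 (k + 2) F z)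
    (hz : (fderiv 𝕜 F z).IsInvertible) : ContDiffAt 𝕜 k (traceForm 𝕜 F) z := by
  have := FiniteDimensional.complete 𝕜 E
  exact (contDiffAt_const.clm_comp (contDiffAt_christoffel hF hz)).const_smul _

theorem contDiffAt_schwarzian_apply {k : WithTop ℕ∞} (hF : ContDiffAt 𝕜 (k + 2) F z)
    (hz : (fderiv 𝕜 F z).IsInvertible) (u v : E) :
    ContDiffAt 𝕜 k (fun x => schwarzian 𝕜 F x u v) z := by
  have := FiniteDimensional.complete 𝕜 E
  have hω := contDiffAt_traceForm hF hz
  simp only [schwarzian_apply]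
  exact ((((contDiffAt_christoffel hF hz).clm_apply contDiffAt_const).clm_apply
    contDiffAt_const).add ((hω.clm_apply contDiffAt_const).smul contDiffAt_const)).add
      ((hω.clm_apply contDiffAt_const).smul contDiffAt_const)

theorem differentiableAt_christoffel (hF : ContDiffAt 𝕜 3 F z)
    (hz : (fderiv 𝕜 F z).IsInvertible) : DifferentiableAt 𝕜 (christoffel 𝕜 F) z := by
  have := FiniteDimensional.complete 𝕜 E
  exact (contDiffAt_christoffel (k := 1) (by norm_num; exact hF) hz).differentiableAt (by simp)

theorem differentiableAt_traceForm (hF : ContDiffAt 𝕜 3 F z)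
    (hz : (fderiv 𝕜 F z).IsInvertible) : DifferentiableAt 𝕜 (traceForm 𝕜 F) z :=
  (contDiffAt_traceForm (k := 1) (by norm_num; exact hF) hz).differentiableAt (by simp)

theorem fderiv_christoffel_comm (hF : ContDiffAt 𝕜 3 F z) (hz : (fderiv 𝕜 F z).IsInvertible)
    (a u v : E) :
    fderiv 𝕜 (christoffel 𝕜 F) z a u v = fderiv 𝕜 (christoffel 𝕜 F) z a v u := by
  have hΓ := differentiableAt_christoffel hF hz
  rw [← fderiv_apply_apply hΓ, ← fderiv_apply_apply hΓ,
    (eventuallyEq_christoffel_comm (hF.of_le (by norm_num)) u v).fderiv_eq]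

theorem divergence_christoffel (hF : ContDiffAt 𝕜 3 F z) (hz : (fderiv 𝕜 F z).IsInvertible)
    (u v : E) : divergence 𝕜 (fun x => christoffel 𝕜 F x u v) z =
      (Module.finrank 𝕜 E + 1) * (traceForm 𝕜 F z (christoffel 𝕜 F z u v) -
        fderiv 𝕜 (traceForm 𝕜 F) z u v) +
          clmTrace 𝕜 E (christoffel 𝕜 F z u ∘L christoffel 𝕜 F z v) := by
  have := FiniteDimensional.complete 𝕜 E
  have hF₂ : ContDiffAt 𝕜 2 F z := hF.of_le (by norm_num)
  have hΓ := differentiableAt_christoffel hF hz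
  have hcurv : fderiv 𝕜 (fun x => christoffel 𝕜 F x u v) z +
      christoffel 𝕜 F z (christoffel 𝕜 F z u v) = fderiv 𝕜 (christoffel 𝕜 F) z u v +
        christoffel 𝕜 F z u ∘L christoffel 𝕜 F z v := by
    ext a
    have := fderiv_christoffel_add_christoffel_comm hF hz a u v
    rwa [← fderiv_apply_apply hΓ, fderiv_christoffel_comm hF hz u a v,
      christoffel_comm hF₂ a v, christoffel_comm hF₂ a] at this
  have htrace : clmTrace 𝕜 E (fderiv 𝕜 (christoffel 𝕜 F) z u v) =
      -(Module.finrank 𝕜 E + 1) * fderiv 𝕜 (traceForm 𝕜 F) z u v := by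
    have hleft := (clmTrace 𝕜 E).hasFDerivAt.comp z
      (hΓ.hasFDerivAt.clm_apply (hasFDerivAt_const v z))
    have hright := ((differentiableAt_traceForm hF hz).hasFDerivAt.clm_apply
      (hasFDerivAt_const v z)).const_mul (-((Module.finrank 𝕜 E : 𝕜) + 1))
    have heq := DFunLike.congr_fun (hleft.unique (hright.congr_of_eventuallyEq
      (Eventually.of_forall fun x => clmTrace_christoffel 𝕜 F x v))) u
    simpa using heq
  have h := congr_arg (clmTrace 𝕜 E) hcurv
  rw [map_add, map_add, htrace, clmTrace_christoffel] at h
  rw [divergence]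
  linear_combination h

theorem fderiv_traceForm_comm (hF : ContDiffAt 𝕜 3 F z) (hz : (fderiv 𝕜 F z).IsInvertible)
    (u v : E) : fderiv 𝕜 (traceForm 𝕜 F) z u v = fderiv 𝕜 (traceForm 𝕜 F) z v u := by
  have hcomm := eventuallyEq_christoffel_comm (hF.of_le (by norm_num)) u v
  have huv := divergence_christoffel hF hz u v
  have hvu := divergence_christoffel hF hz v u
  rw [divergence, hcomm.fderiv_eq, hcomm.eq_of_nhds, clmTrace_comp_comm, ← divergence, hvu] at huv
  have hn : (Module.finrank 𝕜 E : 𝕜) + 1 ≠ 0 := Nat.cast_add_one_ne_zero _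
  refine mul_left_cancel₀ hn ?_
  linear_combination huv

theorem divergence_schwarzian (hF : ContDiffAt 𝕜 3 F z) (hz : (fderiv 𝕜 F z).IsInvertible)
    (u v : E) : divergence 𝕜 (fun x => schwarzian 𝕜 F x u v) z =
      divergence 𝕜 (fun x => christoffel 𝕜 F x u v) z +
        2 * fderiv 𝕜 (traceForm 𝕜 F) z u v := by
  have hω := (differentiableAt_traceForm hF hz).hasFDerivAt
  have hderiv := (((differentiableAt_christoffel hF hz).hasFDerivAt.clm_apply
    (hasFDerivAt_const u z)).clm_apply (hasFDerivAt_const v z))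
  have hsum := (hderiv.add ((hω.clm_apply (hasFDerivAt_const u z)).smul_const v)).add
    ((hω.clm_apply (hasFDerivAt_const v z)).smul_const u)
  have hS : HasFDerivAt (fun x => schwarzian 𝕜 F x u v) _ z :=
    hsum.congr_of_eventuallyEq (Eventually.of_forall fun x => schwarzian_apply 𝕜 F x u v)
  rw [divergence, divergence, hS.fderiv, hderiv.fderiv, map_add, map_add, clmTrace_smulRight,
    clmTrace_smulRight]
  simp only [ContinuousLinearMap.comp_zero, zero_add, ContinuousLinearMap.flip_apply,
    fderiv_traceForm_comm hF hz v u]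
  ring

theorem clmTrace_christoffel_comp (hF : ContDiffAt 𝕜 2 F z) (u v : E) :
    clmTrace 𝕜 E (christoffel 𝕜 F z u ∘L christoffel 𝕜 F z v) =
      clmTrace 𝕜 E (schwarzian 𝕜 F z u ∘L schwarzian 𝕜 F z v) +
        (Module.finrank 𝕜 E + 3) * (traceForm 𝕜 F z u * traceForm 𝕜 F z v) -
          2 * traceForm 𝕜 F z (schwarzian 𝕜 F z u v) := by
  have hcomp : christoffel 𝕜 F z u ∘L christoffel 𝕜 F z v =
      schwarzian 𝕜 F z u ∘L schwarzian 𝕜 F z v - traceForm 𝕜 F z v • schwarzian 𝕜 F z u -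
        (traceForm 𝕜 F z).smulRight (schwarzian 𝕜 F z u v) -
        traceForm 𝕜 F z u • schwarzian 𝕜 F z v +
        (traceForm 𝕜 F z u * traceForm 𝕜 F z v) • ContinuousLinearMap.id 𝕜 E +
        traceForm 𝕜 F z u • (traceForm 𝕜 F z).smulRight v -
        (traceForm 𝕜 F z ∘L schwarzian 𝕜 F z v).smulRight u +
        (2 * traceForm 𝕜 F z v) • (traceForm 𝕜 F z).smulRight u := by
    ext a
    simp only [christoffel_eq_schwarzian_sub, ContinuousLinearMap.comp_apply, sub_apply,
      add_apply, smul_apply, ContinuousLinearMap.id_apply,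
      ContinuousLinearMap.smulRight_apply, map_sub, map_smul]
    module
  rw [hcomp]
  simp only [map_add, map_sub, map_smul, clmTrace_id, clmTrace_smulRight, clmTrace_schwarzian,
    ContinuousLinearMap.comp_apply, schwarzian_comm hF v u, smul_eq_mul]
  ring

/- The equation that expresses the derivative of the trace form through the Schwarzian: the
connection is flat, so its Ricci-type contraction vanishes. -/
theorem finrank_sub_one_mul_fderiv_traceForm (hF : ContDiffAt 𝕜 3 F z)
    (hz : (fderiv 𝕜 F z).IsInvertible) (u v : E) :
    (Module.finrank 𝕜 E - 1) * (fderiv 𝕜 (traceForm 𝕜 F) z u v +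
      traceForm 𝕜 F z u * traceForm 𝕜 F z v - traceForm 𝕜 F z (schwarzian 𝕜 F z u v)) =
    clmTrace 𝕜 E (schwarzian 𝕜 F z u ∘L schwarzian 𝕜 F z v) -
      divergence 𝕜 (fun x => schwarzian 𝕜 F x u v) z := by
  have hω : traceForm 𝕜 F z (christoffel 𝕜 F z u v) = traceForm 𝕜 F z (schwarzian 𝕜 F z u v) -
      2 * (traceForm 𝕜 F z u * traceForm 𝕜 F z v) := by
    simp only [schwarzian_apply, map_add, map_smul, smul_eq_mul]
    ring
  rw [divergence_schwarzian hF hz, divergence_christoffel hF hz,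
    clmTrace_christoffel_comp (hF.of_le (by norm_num)), hω]
  ring

end Schwarzian

section ChainRule

variable {𝕜 : Type*} [RCLike 𝕜] {D E H : Type*} [NormedAddCommGroup D] [NormedSpace 𝕜 D]
  [NormedAddCommGroup E] [NormedSpace 𝕜 E] [NormedAddCommGroup H] [NormedSpace 𝕜 H]
  {F : E → H} {φ : D → E} {z : D}

theorem christoffel_comp (hF : ContDiffAt 𝕜 2 F (φ z)) (hφ : ContDiffAt 𝕜 2 φ z)
    (hF' : (fderiv 𝕜 F (φ z)).IsInvertible) (u v : D) :
    christoffel 𝕜 (F ∘ φ) z u v =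
      (fderiv 𝕜 φ z).inverse (christoffel 𝕜 F (φ z) (fderiv 𝕜 φ z u) (fderiv 𝕜 φ z v)) +
        christoffel 𝕜 φ z u v := by
  have hDF : DifferentiableAt 𝕜 (fderiv 𝕜 F) (φ z) :=
    (hF.fderiv_right (m := 1) (by norm_num)).differentiableAt (by simp)
  have hDφ : DifferentiableAt 𝕜 (fderiv 𝕜 φ) z :=
    (hφ.fderiv_right (m := 1) (by norm_num)).differentiableAt (by simp)
  have hchain : fderiv 𝕜 (F ∘ φ) =ᶠ[𝓝 z] fun x => fderiv 𝕜 F (φ x) ∘L fderiv 𝕜 φ x := by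
    filter_upwards [hφ.continuousAt.eventually (hF.eventually (by simp)),
      hφ.eventually (by simp)] with x hFx hφx
    exact fderiv_comp x (hFx.differentiableAt (by simp)) (hφx.differentiableAt (by simp))
  have hD2 := (((hDF.hasFDerivAt.comp z (hφ.differentiableAt (by simp)).hasFDerivAt).clm_comp
    hDφ.hasFDerivAt).congr_of_eventuallyEq hchain).fderiv
  rw [christoffel_apply, hchain.eq_of_nhds, hF'.inverse_comp_of_left, hD2]
  simp [christoffel_apply, hF'.inverse_apply_self, add_comm]

variable [FiniteDimensional 𝕜 D] [FiniteDimensional 𝕜 E]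

theorem traceForm_comp (hF : ContDiffAt 𝕜 2 F (φ z)) (hφ : ContDiffAt 𝕜 2 φ z)
    (hF' : (fderiv 𝕜 F (φ z)).IsInvertible) (hφ' : (fderiv 𝕜 φ z).IsInvertible) :
    traceForm 𝕜 (F ∘ φ) z = traceForm 𝕜 F (φ z) ∘L fderiv 𝕜 φ z + traceForm 𝕜 φ z := by
  ext u
  have hdim : Module.finrank 𝕜 D = Module.finrank 𝕜 E := by
    obtain ⟨e, -⟩ := hφ'
    exact e.toLinearEquiv.finrank_eq
  have hΓ : christoffel 𝕜 (F ∘ φ) z u = (fderiv 𝕜 φ z).inverse ∘L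
      christoffel 𝕜 F (φ z) (fderiv 𝕜 φ z u) ∘L fderiv 𝕜 φ z + christoffel 𝕜 φ z u := by
    ext v
    exact christoffel_comp hF hφ hF' u v
  simp [traceForm, hΓ, clmTrace_inverse_comp_comp hφ', hdim, mul_add]

theorem fderiv_schwarzian_comp (hF : ContDiffAt 𝕜 2 F (φ z)) (hφ : ContDiffAt 𝕜 2 φ z)
    (hF' : (fderiv 𝕜 F (φ z)).IsInvertible) (hφ' : (fderiv 𝕜 φ z).IsInvertible) (u v : D) :
    fderiv 𝕜 φ z (schwarzian 𝕜 (F ∘ φ) z u v) =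
      schwarzian 𝕜 F (φ z) (fderiv 𝕜 φ z u) (fderiv 𝕜 φ z v) +
        fderiv 𝕜 φ z (schwarzian 𝕜 φ z u v) := by
  simp only [schwarzian_apply, christoffel_comp hF hφ hF', traceForm_comp hF hφ hF' hφ',
    map_add, map_smul, hφ'.self_apply_inverse, add_apply, ContinuousLinearMap.comp_apply]
  module

end ChainRule

section LinearCoordinates

variable {𝕜 : Type*} [RCLike 𝕜] {E H : Type*} [NormedAddCommGroup E] [NormedSpace 𝕜 E]
  [NormedAddCommGroup H] [NormedSpace 𝕜 H]

theorem christoffel_clm (L : E →L[𝕜] H) (z : E) : christoffel 𝕜 L z = 0 := by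
  have hL : fderiv 𝕜 L = fun _ => L := funext fun x => L.fderiv
  ext u v
  simp [christoffel_apply, hL]

variable [FiniteDimensional 𝕜 E]

theorem traceForm_clm (L : E →L[𝕜] H) (z : E) : traceForm 𝕜 L z = 0 := by
  ext v
  simp [traceForm, christoffel_clm]

theorem schwarzian_clm (L : E →L[𝕜] H) (z : E) : schwarzian 𝕜 L z = 0 := by
  ext u v
  simp [schwarzian_apply, christoffel_clm, traceForm_clm]

variable {D : Type*} [NormedAddCommGroup D] [NormedSpace 𝕜 D] [FiniteDimensional 𝕜 D]
  {F : E → H} {L : D ≃L[𝕜] E} {z : D}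

theorem traceForm_comp_equiv (hF : ContDiffAt 𝕜 2 F (L z))
    (hF' : (fderiv 𝕜 F (L z)).IsInvertible) (v : D) :
    traceForm 𝕜 (F ∘ L) z v = traceForm 𝕜 F (L z) (L v) := by
  have hL : fderiv 𝕜 L z = L := L.fderiv
  have hω : traceForm 𝕜 L z = 0 := traceForm_clm (L : D →L[𝕜] E) z
  simp [traceForm_comp hF L.contDiff.contDiffAt hF' ⟨L, hL.symm⟩, hL, hω]

theorem schwarzian_comp_equiv (hF : ContDiffAt 𝕜 2 F (L z))
    (hF' : (fderiv 𝕜 F (L z)).IsInvertible) (u v : D) :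
    L (schwarzian 𝕜 (F ∘ L) z u v) = schwarzian 𝕜 F (L z) (L u) (L v) := by
  have hL : fderiv 𝕜 L z = L := L.fderiv
  have hS : schwarzian 𝕜 L z = 0 := schwarzian_clm (L : D →L[𝕜] E) z
  simpa [hL, hS] using fderiv_schwarzian_comp hF L.contDiff.contDiffAt hF' ⟨L, hL.symm⟩ u v

end LinearCoordinates

section FractionalLinear

variable {𝕜 : Type*} [RCLike 𝕜] {E : Type*} [NormedAddCommGroup E] [NormedSpace 𝕜 E]
  {A : E →L[𝕜] E} {b : E} {ℓ : E →L[𝕜] 𝕜} {z : E}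

/-- The fractional linear map `x ↦ (b + A x) / (1 + ℓ x)`; at a pole it takes the value `0`. -/
def fractionalLinear (A : E →L[𝕜] E) (b : E) (ℓ : E →L[𝕜] 𝕜) (x : E) : E :=
  (1 + ℓ x)⁻¹ • (b + A x)

theorem contDiffAt_fractionalLinear {k : WithTop ℕ∞} (hz : 1 + ℓ z ≠ 0) :
    ContDiffAt 𝕜 k (fractionalLinear A b ℓ) z :=
  ((contDiffAt_const.add ℓ.contDiff.contDiffAt).inv hz).smul
    (contDiffAt_const.add A.contDiff.contDiffAt)

theorem hasFDerivAt_inv_one_add (hz : 1 + ℓ z ≠ 0) :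
    HasFDerivAt (fun x => (1 + ℓ x)⁻¹) (-((1 + ℓ z)⁻¹ ^ 2) • ℓ) z := by
  rw [inv_pow]
  exact (hasDerivAt_inv hz).comp_hasFDerivAt z (ℓ.hasFDerivAt.const_add 1)

theorem hasFDerivAt_fractionalLinear (hz : 1 + ℓ z ≠ 0) :
    HasFDerivAt (fractionalLinear A b ℓ)
      ((1 + ℓ z)⁻¹ • (A - ℓ.smulRight (fractionalLinear A b ℓ z))) z := by
  refine ((hasFDerivAt_inv_one_add hz).smul (A.hasFDerivAt.const_add b)).congr_fderiv ?_
  ext v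
  simp only [fractionalLinear, add_apply, sub_apply, smul_apply,
    ContinuousLinearMap.smulRight_apply, smul_eq_mul]
  module

theorem fderiv_fractionalLinear_apply (hz : 1 + ℓ z ≠ 0) (v : E) :
    fderiv 𝕜 (fractionalLinear A b ℓ) z v =
      (1 + ℓ z)⁻¹ • (A v - ℓ v • fractionalLinear A b ℓ z) := by
  simp [(hasFDerivAt_fractionalLinear hz).fderiv]

theorem fderiv_fderiv_fractionalLinear (hz : 1 + ℓ z ≠ 0) (u v : E) :
    fderiv 𝕜 (fderiv 𝕜 (fractionalLinear A b ℓ)) z u v =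
      -(1 + ℓ z)⁻¹ • (ℓ u • fderiv 𝕜 (fractionalLinear A b ℓ) z v +
        ℓ v • fderiv 𝕜 (fractionalLinear A b ℓ) z u) := by
  have hD : DifferentiableAt 𝕜 (fderiv 𝕜 (fractionalLinear A b ℓ)) z :=
    ((contDiffAt_fractionalLinear (k := 2) hz).fderiv_right (m := 1) (by norm_num)).differentiableAt
      (by simp)
  have hpole : ∀ᶠ x in 𝓝 z, 1 + ℓ x ≠ 0 :=
    (continuous_const.add ℓ.continuous).continuousAt.eventually_ne hz
  have hleft := hD.hasFDerivAt.clm_apply (hasFDerivAt_const v z)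
  have hright := (hasFDerivAt_inv_one_add hz).smul
    (((hasFDerivAt_fractionalLinear (A := A) (b := b) hz).const_smul (ℓ v)).const_sub (A v))
  have heq := DFunLike.congr_fun (hleft.unique (hright.congr_of_eventuallyEq
    (hpole.mono fun x hx => fderiv_fractionalLinear_apply hx v))) u
  simp only [ContinuousLinearMap.comp_zero, zero_add, ContinuousLinearMap.flip_apply, add_apply,
    smul_apply, ContinuousLinearMap.smulRight_apply, neg_apply, Pi.smul_apply] at heq
  rw [heq, fderiv_fractionalLinear_apply hz, fderiv_fractionalLinear_apply hz]
  simp only [sub_apply, ContinuousLinearMap.smulRight_apply, smul_eq_mul]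
  module

theorem christoffel_fractionalLinear (hz : 1 + ℓ z ≠ 0)
    (hz' : (fderiv 𝕜 (fractionalLinear A b ℓ) z).IsInvertible) (u v : E) :
    christoffel 𝕜 (fractionalLinear A b ℓ) z u v = -(1 + ℓ z)⁻¹ • (ℓ u • v + ℓ v • u) := by
  simp only [christoffel_apply, fderiv_fderiv_fractionalLinear hz, map_smul, map_add,
    hz'.inverse_apply_self]

variable [FiniteDimensional 𝕜 E]

theorem traceForm_fractionalLinear (hz : 1 + ℓ z ≠ 0)
    (hz' : (fderiv 𝕜 (fractionalLinear A b ℓ) z).IsInvertible) :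
    traceForm 𝕜 (fractionalLinear A b ℓ) z = (1 + ℓ z)⁻¹ • ℓ := by
  ext u
  have hΓ : christoffel 𝕜 (fractionalLinear A b ℓ) z u =
      -(1 + ℓ z)⁻¹ • (ℓ u • ContinuousLinearMap.id 𝕜 E + ℓ.smulRight u) := by
    ext v
    simp [christoffel_fractionalLinear hz hz']
  have hn : (Module.finrank 𝕜 E : 𝕜) + 1 ≠ 0 := Nat.cast_add_one_ne_zero _
  simp only [traceForm, smul_apply, ContinuousLinearMap.comp_apply, hΓ, map_smul, map_add,
    clmTrace_id, clmTrace_smulRight, smul_eq_mul]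
  field_simp

theorem schwarzian_fractionalLinear (hz : 1 + ℓ z ≠ 0)
    (hz' : (fderiv 𝕜 (fractionalLinear A b ℓ) z).IsInvertible) :
    schwarzian 𝕜 (fractionalLinear A b ℓ) z = 0 := by
  ext u v
  simp only [schwarzian_apply, christoffel_fractionalLinear hz hz',
    traceForm_fractionalLinear hz hz', smul_apply, smul_eq_mul, zero_apply]
  module

end FractionalLinear

section Lorentz

variable {E : Type*} [NormedAddCommGroup E] [InnerProductSpace ℂ E]

/-- The Hermitian form of signature `(1, n)` on `ℂ × E`. In the chart `z ↦ (1, z)`, the ball is the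
set of its positive lines, and its isometries act on the ball by automorphisms. -/
def lorentz (X Y : ℂ × E) : ℂ := starRingEnd ℂ X.1 * Y.1 - ⟪X.2, Y.2⟫_ℂ

theorem lorentz_self (X : ℂ × E) : lorentz X X = ((‖X.1‖ ^ 2 - ‖X.2‖ ^ 2 : ℝ) : ℂ) := by
  simp [lorentz, Complex.conj_mul', inner_self_eq_norm_sq_to_K]

/-- The Gram determinant of two vectors for the Lorentz form, with reversed sign. -/
def lorentzGram (X Y : ℂ × E) : ℝ :=
  ‖lorentz X Y‖ ^ 2 - (lorentz X X).re * (lorentz Y Y).re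

theorem lorentzGram_smul_smul (c d : ℂ) (X Y : ℂ × E) :
    lorentzGram (c • X) (d • Y) = (‖c‖ * ‖d‖) ^ 2 * lorentzGram X Y := by
  have hsmul : lorentz (c • X) (d • Y) = starRingEnd ℂ c * d * lorentz X Y := by
    simp only [lorentz, Prod.smul_fst, Prod.smul_snd, smul_eq_mul, map_mul, inner_smul_left,
      inner_smul_right]
    ring
  simp only [lorentzGram, lorentz_self, hsmul, Complex.ofReal_re, Prod.smul_fst, Prod.smul_snd,
    norm_smul, norm_mul, RCLike.norm_conj]
  ring

theorem lorentzGram_add_smul (c : ℂ) (X Y : ℂ × E) :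
    lorentzGram X (Y + c • X) = lorentzGram X Y := by
  have hconj : lorentz Y X = starRingEnd ℂ (lorentz X Y) := by
    simp [lorentz, mul_comm]
  have hXY : lorentz X (Y + c • X) = lorentz X Y + c * lorentz X X := by
    simp only [lorentz, Prod.fst_add, Prod.snd_add, Prod.smul_fst, Prod.smul_snd, smul_eq_mul,
      inner_add_right, inner_smul_right]
    ring
  have hYY : lorentz (Y + c • X) (Y + c • X) = lorentz Y Y + c * starRingEnd ℂ (lorentz X Y) +
      starRingEnd ℂ c * (lorentz X Y + c * lorentz X X) := by
    rw [← hXY, ← hconj]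
    simp only [lorentz, Prod.fst_add, Prod.snd_add, Prod.smul_fst, Prod.smul_snd, smul_eq_mul,
      inner_add_right, inner_add_left, inner_smul_right, inner_smul_left, map_add, map_mul]
    ring
  obtain ⟨r, hr⟩ : ∃ r : ℝ, lorentz X X = r := ⟨_, lorentz_self X⟩
  rw [lorentzGram, lorentzGram, hXY, hYY, hr, ← Complex.normSq_eq_norm_sq,
    ← Complex.normSq_eq_norm_sq]
  simp only [Complex.normSq_apply, Complex.add_re, Complex.add_im, Complex.mul_re, Complex.mul_im,
    Complex.conj_re, Complex.conj_im, Complex.ofReal_re, Complex.ofReal_im]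
  ring

/-- The linear part of the boost of the ball that moves the origin to `a`: it is
`1` on `ℂ a` and `√(1 - ‖a‖²)` on the orthogonal complement. -/
def boostLinear (a : E) : E →L[ℂ] E :=
  (√(1 - ‖a‖ ^ 2) : ℂ) • ContinuousLinearMap.id ℂ E +
    ((1 + √(1 - ‖a‖ ^ 2) : ℂ)⁻¹ • innerSL ℂ a).smulRight a

theorem boostLinear_apply (a v : E) : boostLinear a v =
    (√(1 - ‖a‖ ^ 2) : ℂ) • v + ((1 + √(1 - ‖a‖ ^ 2) : ℂ)⁻¹ * ⟪a, v⟫_ℂ) • a := by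
  simp [boostLinear]

/-- The linear map of `ℂ × E` that induces the automorphism of the ball moving the origin to `a`. -/
def lorentzBoost (a : E) (X : ℂ × E) : ℂ × E := (X.1 + ⟪a, X.2⟫_ℂ, X.1 • a + boostLinear a X.2)

theorem inner_boostLinear_left (a u v : E) :
    ⟪boostLinear a u, v⟫_ℂ = ⟪u, boostLinear a v⟫_ℂ := by
  have hc : starRingEnd ℂ (1 + √(1 - ‖a‖ ^ 2) : ℂ)⁻¹ = (1 + √(1 - ‖a‖ ^ 2) : ℂ)⁻¹ := by simp
  simp only [boostLinear_apply, inner_add_left, inner_add_right, inner_smul_left, inner_smul_right,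
    map_mul, hc, inner_conj_symm, Complex.conj_ofReal]
  ring

theorem boostLinear_self {a : E} (ha : ‖a‖ ≤ 1) : boostLinear a a = a := by
  set c : ℝ := √(1 - ‖a‖ ^ 2)
  have hc : c ^ 2 = 1 - ‖a‖ ^ 2 := Real.sq_sqrt (by nlinarith [norm_nonneg a])
  have hc₁ : 1 + c ≠ 0 := by positivity
  have hnorm : ((‖a‖ : ℂ)) ^ 2 = 1 - (c : ℂ) ^ 2 := by exact_mod_cast (by linarith)
  have hc₁' : (1 + c : ℂ) ≠ 0 := by exact_mod_cast hc₁
  have hcoeff : (c : ℂ) + (1 + c : ℂ)⁻¹ * ⟪a, a⟫_ℂ = 1 := by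
    rw [inner_self_eq_norm_sq_to_K, RCLike.ofReal_eq_complex_ofReal, hnorm]
    field_simp
    ring
  rw [boostLinear_apply, ← add_smul, hcoeff, one_smul]

theorem boostLinear_boostLinear {a : E} (ha : ‖a‖ ≤ 1) (v : E) :
    boostLinear a (boostLinear a v) = (1 - ‖a‖ ^ 2 : ℂ) • v + ⟪a, v⟫_ℂ • a := by
  have hsq : (√(1 - ‖a‖ ^ 2) : ℂ) ^ 2 = 1 - (‖a‖ : ℂ) ^ 2 := by
    exact_mod_cast Real.sq_sqrt (by nlinarith [norm_nonneg a] : 0 ≤ 1 - ‖a‖ ^ 2)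
  have hne : (1 + √(1 - ‖a‖ ^ 2) : ℂ) ≠ 0 := by
    exact_mod_cast (by positivity : 1 + √(1 - ‖a‖ ^ 2) ≠ 0)
  conv_lhs => rw [boostLinear_apply a v, map_add, map_smul, map_smul, boostLinear_self ha,
    boostLinear_apply a v]
  rw [← hsq]
  match_scalars
  · ring
  · linear_combination ⟪a, v⟫_ℂ * inv_mul_cancel₀ hne

theorem lorentz_lorentzBoost {a : E} (ha : ‖a‖ ≤ 1) (X Y : ℂ × E) :
    lorentz (lorentzBoost a X) (lorentzBoost a Y) = (1 - ‖a‖ ^ 2 : ℂ) * lorentz X Y := by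
  simp only [lorentz, lorentzBoost, inner_add_left, inner_add_right, inner_smul_left,
    inner_smul_right, inner_boostLinear_left, boostLinear_boostLinear ha, boostLinear_self ha,
    ← inner_boostLinear_left a a, map_add, inner_conj_symm, inner_self_eq_norm_sq_to_K,
    RCLike.ofReal_eq_complex_ofReal]
  ring

theorem lorentzGram_lorentzBoost {a : E} (ha : ‖a‖ ≤ 1) (X Y : ℂ × E) :
    lorentzGram (lorentzBoost a X) (lorentzBoost a Y) = (1 - ‖a‖ ^ 2) ^ 2 * lorentzGram X Y := by
  have hcast : (1 - ‖a‖ ^ 2 : ℂ) = ((1 - ‖a‖ ^ 2 : ℝ) : ℂ) := by push_cast; rfl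
  simp only [lorentzGram, lorentz_lorentzBoost ha, hcast, Complex.re_ofReal_mul, norm_mul,
    Complex.norm_real, mul_pow, Real.norm_eq_abs, sq_abs]
  ring

end Lorentz

section Bergman

theorem norm_sq_lt_one_of_mem_ball {E : Type*} [SeminormedAddCommGroup E] {z : E}
    (hz : z ∈ ball (0 : E) 1) : ‖z‖ ^ 2 < 1 := by
  have : ‖z‖ < 1 := mem_ball_zero_iff.mp hz
  nlinarith [norm_nonneg z]

variable {E : Type*} [NormedAddCommGroup E] [InnerProductSpace ℂ E]

/-- The square of the Bergman norm of the tangent vector `v` at the point `z` of the unit ball,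
normalised to be the Euclidean norm at the origin. -/
def bergmanSq (z v : E) : ℝ :=
  (‖v‖ ^ 2 * (1 - ‖z‖ ^ 2) + ‖⟪z, v⟫_ℂ‖ ^ 2) / (1 - ‖z‖ ^ 2) ^ 2

theorem bergmanSq_eq_lorentzGram (z v : E) : bergmanSq z v =
    lorentzGram (1, z) (0, v) / (lorentz (1, z) (1, z)).re ^ 2 := by
  have hzv : ‖lorentz (1, z) (0, v)‖ = ‖⟪z, v⟫_ℂ‖ := by simp [lorentz]
  rw [bergmanSq, lorentzGram, lorentz_self, lorentz_self, hzv, Complex.ofReal_re,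
    Complex.ofReal_re, norm_one, norm_zero]
  ring

theorem norm_sq_le_bergmanSq {z : E} (hz : z ∈ ball (0 : E) 1) (v : E) :
    ‖v‖ ^ 2 ≤ bergmanSq z v := by
  have hz₁ := norm_sq_lt_one_of_mem_ball hz
  rw [bergmanSq, le_div_iff₀ (by nlinarith)]
  nlinarith [mul_nonneg (mul_nonneg (sq_nonneg ‖v‖) (sq_nonneg ‖z‖)) (sub_pos.mpr hz₁).le,
    sq_nonneg ‖⟪z, v⟫_ℂ‖]

theorem bergmanSq_le {z : E} (hz : z ∈ ball (0 : E) 1) (v : E) :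
    bergmanSq z v ≤ ‖v‖ ^ 2 / (1 - ‖z‖ ^ 2) ^ 2 := by
  have hz₁ := norm_sq_lt_one_of_mem_ball hz
  have hinner : ‖⟪z, v⟫_ℂ‖ ^ 2 ≤ ‖z‖ ^ 2 * ‖v‖ ^ 2 := by
    rw [← mul_pow]
    exact pow_le_pow_left₀ (norm_nonneg _) (norm_inner_le_norm z v) 2
  rw [bergmanSq]
  gcongr
  linarith

theorem eq_zero_of_bergmanSq_eq_zero {z v : E} (hz : z ∈ ball (0 : E) 1)
    (hv : bergmanSq z v = 0) : v = 0 :=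
  norm_eq_zero.mp (sq_eq_zero_iff.mp
    (le_antisymm ((norm_sq_le_bergmanSq hz v).trans hv.le) (sq_nonneg _)))

theorem bergmanSq_nonneg {z : E} (hz : z ∈ ball (0 : E) 1) (v : E) : 0 ≤ bergmanSq z v :=
  (sq_nonneg ‖v‖).trans (norm_sq_le_bergmanSq hz v)

theorem bergmanSq_zero_left (v : E) : bergmanSq 0 v = ‖v‖ ^ 2 := by simp [bergmanSq]

theorem bergmanSq_zero_right (z : E) : bergmanSq z 0 = 0 := by simp [bergmanSq]

theorem bergmanSq_smul (z : E) (c : ℂ) (v : E) :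
    bergmanSq z (c • v) = ‖c‖ ^ 2 * bergmanSq z v := by
  simp only [bergmanSq, norm_smul, inner_smul_right, norm_mul]
  ring

end Bergman

section BallAut

variable {E : Type*} [NormedAddCommGroup E] [InnerProductSpace ℂ E] {a z : E}

/-- The automorphism of the unit ball that moves the origin to `a`. -/
def ballAut (a : E) : E → E := fractionalLinear (boostLinear a) a (innerSL ℂ a)

theorem ballAut_zero (a : E) : ballAut a 0 = a := by simp [ballAut, fractionalLinear]

theorem one_add_inner_ne_zero (ha : ‖a‖ ≤ 1) (hz : z ∈ ball (0 : E) 1) :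
    1 + innerSL ℂ a z ≠ 0 := by
  have hlt : ‖innerSL ℂ a z‖ < 1 :=
    calc ‖⟪a, z⟫_ℂ‖ ≤ ‖a‖ * ‖z‖ := norm_inner_le_norm a z
      _ ≤ 1 * ‖z‖ := by gcongr
      _ < 1 := by simpa using mem_ball_zero_iff.mp hz
  intro h
  rw [eq_neg_of_add_eq_zero_right h] at hlt
  simp at hlt

theorem lorentzBoost_one (ha : ‖a‖ ≤ 1) (hz : z ∈ ball (0 : E) 1) :
    lorentzBoost a (1, z) = (1 + innerSL ℂ a z) • ((1, ballAut a z) : ℂ × E) := by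
  ext
  · simp [lorentzBoost]
  · simp only [lorentzBoost, one_smul, ballAut, fractionalLinear, Prod.smul_snd,
      smul_inv_smul₀ (one_add_inner_ne_zero ha hz)]

theorem lorentzBoost_zero (ha : ‖a‖ ≤ 1) (hz : z ∈ ball (0 : E) 1) (v : E) :
    lorentzBoost a (0, v) = (1 + innerSL ℂ a z) • ((0, fderiv ℂ (ballAut a) z v) : ℂ × E) +
      innerSL ℂ a v • ((1, ballAut a z) : ℂ × E) := by
  have hd := one_add_inner_ne_zero ha hz
  ext
  · simp [lorentzBoost]
  · simp only [lorentzBoost, zero_smul, zero_add, ballAut, fderiv_fractionalLinear_apply hd,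
      Prod.snd_add, Prod.smul_snd, smul_inv_smul₀ hd, sub_add_cancel]

theorem one_sub_norm_sq_ballAut (ha : ‖a‖ ≤ 1) (hz : z ∈ ball (0 : E) 1) :
    ‖1 + innerSL ℂ a z‖ ^ 2 * (1 - ‖ballAut a z‖ ^ 2) = (1 - ‖a‖ ^ 2) * (1 - ‖z‖ ^ 2) := by
  have h := lorentz_lorentzBoost ha (1, z) (1, z)
  rw [lorentzBoost_one ha hz, lorentz_self, lorentz_self] at h
  simp only [Prod.smul_fst, Prod.smul_snd, smul_eq_mul, mul_one, norm_smul, norm_one] at h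
  have h' : ‖1 + innerSL ℂ a z‖ ^ 2 - (‖1 + innerSL ℂ a z‖ * ‖ballAut a z‖) ^ 2 =
      (1 - ‖a‖ ^ 2) * (1 ^ 2 - ‖z‖ ^ 2) := by exact_mod_cast h
  linear_combination h'

theorem ballAut_mem_ball (ha : a ∈ ball (0 : E) 1) (hz : z ∈ ball (0 : E) 1) :
    ballAut a z ∈ ball (0 : E) 1 := by
  have ha₁ : ‖a‖ < 1 := mem_ball_zero_iff.mp ha
  have hd : 0 < ‖1 + innerSL ℂ a z‖ ^ 2 :=
    pow_pos (norm_pos_iff.mpr (one_add_inner_ne_zero ha₁.le hz)) 2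
  have hpos : 0 < 1 - ‖ballAut a z‖ ^ 2 := by
    refine pos_of_mul_pos_right ?_ hd.le
    rw [one_sub_norm_sq_ballAut ha₁.le hz]
    exact mul_pos (sub_pos.mpr (norm_sq_lt_one_of_mem_ball ha))
      (sub_pos.mpr (norm_sq_lt_one_of_mem_ball hz))
  rw [mem_ball_zero_iff]
  nlinarith [norm_nonneg (ballAut a z)]

theorem bergmanSq_ballAut (ha : a ∈ ball (0 : E) 1) (hz : z ∈ ball (0 : E) 1) (v : E) :
    bergmanSq (ballAut a z) (fderiv ℂ (ballAut a) z v) = bergmanSq z v := by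
  have ha₁ : ‖a‖ ≤ 1 := (mem_ball_zero_iff.mp ha).le
  have hd := one_add_inner_ne_zero ha₁ hz
  have hane : 1 - ‖a‖ ^ 2 ≠ 0 := (sub_pos.mpr (norm_sq_lt_one_of_mem_ball ha)).ne'
  have hzne : 1 - ‖z‖ ^ 2 ≠ 0 := (sub_pos.mpr (norm_sq_lt_one_of_mem_ball hz)).ne'
  have hgram : (‖1 + innerSL ℂ a z‖ ^ 2) ^ 2 *
      lorentzGram (1, ballAut a z) (0, fderiv ℂ (ballAut a) z v) =
        (1 - ‖a‖ ^ 2) ^ 2 * lorentzGram (1, z) (0, v) := by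
    have hboost : lorentzBoost a (0, v) =
        (1 + innerSL ℂ a z) • ((0, fderiv ℂ (ballAut a) z v) : ℂ × E) +
          ((1 + innerSL ℂ a z)⁻¹ * innerSL ℂ a v) •
            (1 + innerSL ℂ a z) • ((1, ballAut a z) : ℂ × E) := by
      rw [lorentzBoost_zero ha₁ hz, mul_comm, mul_smul, inv_smul_smul₀ hd]
    rw [← lorentzGram_lorentzBoost ha₁, hboost, lorentzBoost_one ha₁ hz, lorentzGram_add_smul,
      lorentzGram_smul_smul, ← pow_two]
  have hnorm := one_sub_norm_sq_ballAut ha₁ hz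
  have hne : 1 - ‖ballAut a z‖ ^ 2 ≠ 0 :=
    (sub_pos.mpr (norm_sq_lt_one_of_mem_ball (ballAut_mem_ball ha hz))).ne'
  have hzz (x : E) : (lorentz (1, x) (1, x)).re = 1 - ‖x‖ ^ 2 := by
    rw [lorentz_self, Complex.ofReal_re, norm_one, one_pow]
  rw [bergmanSq_eq_lorentzGram, bergmanSq_eq_lorentzGram, hzz, hzz,
    div_eq_div_iff (by positivity) (by positivity)]
  have hd' : (‖1 + innerSL ℂ a z‖ ^ 2) ^ 2 * (1 - ‖a‖ ^ 2) ^ 2 ≠ 0 := by positivity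
  refine mul_left_cancel₀ hd' ?_
  linear_combination (1 - ‖a‖ ^ 2) ^ 2 * (1 - ‖z‖ ^ 2) ^ 2 * hgram -
    (1 - ‖a‖ ^ 2) ^ 2 * lorentzGram (1, z) (0, v) * (‖1 + innerSL ℂ a z‖ ^ 2 *
      (1 - ‖ballAut a z‖ ^ 2) + (1 - ‖a‖ ^ 2) * (1 - ‖z‖ ^ 2)) * hnorm

end BallAut

section Dilation

variable {E : Type*} [NormedAddCommGroup E]

theorem fderiv_const_smul_id [NormedSpace ℂ E] (r : ℂ) (z : E) :
    fderiv ℂ (fun x : E => r • x) z = r • ContinuousLinearMap.id ℂ E :=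
  (r • ContinuousLinearMap.id ℂ E).fderiv

theorem isInvertible_fderiv_const_smul [NormedSpace ℂ E] {r : ℂ} (hr : r ≠ 0) (z : E) :
    (fderiv ℂ (fun x : E => r • x) z).IsInvertible :=
  ⟨ContinuousLinearEquiv.smulLeft (Units.mk0 r hr), by ext v; simp [fderiv_const_smul_id]⟩

theorem smul_mem_ball_zero_one [NormedSpace ℂ E] {r : ℂ} (hr : ‖r‖ ≤ 1) {z : E}
    (hz : z ∈ ball (0 : E) 1) : r • z ∈ ball (0 : E) 1 := by
  rw [mem_ball_zero_iff] at hz ⊢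
  rw [norm_smul]
  exact (mul_le_of_le_one_left (norm_nonneg z) hr).trans_lt hz

variable [InnerProductSpace ℂ E]

theorem bergmanSq_const_smul (r : ℂ) (z v : E) : bergmanSq (r • z) (r • v) =
    ‖r‖ ^ 2 * (‖v‖ ^ 2 * (1 - ‖r • z‖ ^ 2) + ‖r‖ ^ 2 * ‖⟪z, v⟫_ℂ‖ ^ 2) /
      (1 - ‖r • z‖ ^ 2) ^ 2 := by
  rw [bergmanSq_smul, bergmanSq, inner_smul_left, norm_mul, RCLike.norm_conj]
  ring

theorem sq_mul_one_sub_norm_sq_le {r : ℂ} (hr : ‖r‖ ≤ 1) (z : E) :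
    ‖r‖ ^ 2 * (1 - ‖z‖ ^ 2) ≤ 1 - ‖r • z‖ ^ 2 := by
  rw [norm_smul]
  nlinarith [norm_nonneg r]

theorem le_bergmanSq_const_smul {r : ℂ} (hr : ‖r‖ ≤ 1) {z : E} (hz : z ∈ ball (0 : E) 1) (v : E) :
    (‖r‖ ^ 2 * (1 - ‖z‖ ^ 2) / (1 - ‖r • z‖ ^ 2)) ^ 2 * bergmanSq z v ≤
      bergmanSq (r • z) (r • v) := by
  have hle := sq_mul_one_sub_norm_sq_le hr z
  have hs := sub_pos.mpr (norm_sq_lt_one_of_mem_ball hz)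
  have ht := sub_pos.mpr (norm_sq_lt_one_of_mem_ball (smul_mem_ball_zero_one hr hz))
  calc (‖r‖ ^ 2 * (1 - ‖z‖ ^ 2) / (1 - ‖r • z‖ ^ 2)) ^ 2 * bergmanSq z v
      = ‖r‖ ^ 2 * (‖v‖ ^ 2 * (‖r‖ ^ 2 * (1 - ‖z‖ ^ 2)) + ‖r‖ ^ 2 * ‖⟪z, v⟫_ℂ‖ ^ 2) /
          (1 - ‖r • z‖ ^ 2) ^ 2 := by
        rw [bergmanSq]
        field_simp
    _ ≤ bergmanSq (r • z) (r • v) := by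
        rw [bergmanSq_const_smul]
        gcongr

theorem bergmanSq_const_smul_le {r : ℂ} (hr : ‖r‖ ≤ 1) {z : E} (hz : z ∈ ball (0 : E) 1) (v : E) :
    bergmanSq (r • z) (r • v) ≤
      ‖r‖ ^ 2 * (1 - ‖z‖ ^ 2) / (1 - ‖r • z‖ ^ 2) * bergmanSq z v := by
  have hle := sq_mul_one_sub_norm_sq_le hr z
  have hs := sub_pos.mpr (norm_sq_lt_one_of_mem_ball hz)
  have ht := sub_pos.mpr (norm_sq_lt_one_of_mem_ball (smul_mem_ball_zero_one hr hz))
  calc bergmanSq (r • z) (r • v)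
      = ‖r‖ ^ 2 / (1 - ‖r • z‖ ^ 2) *
          (‖v‖ ^ 2 + ‖r‖ ^ 2 * ‖⟪z, v⟫_ℂ‖ ^ 2 / (1 - ‖r • z‖ ^ 2)) := by
        rw [bergmanSq_const_smul]
        field_simp
    _ ≤ ‖r‖ ^ 2 / (1 - ‖r • z‖ ^ 2) * (‖v‖ ^ 2 + ‖⟪z, v⟫_ℂ‖ ^ 2 / (1 - ‖z‖ ^ 2)) := by
        gcongr _ * (_ + ?_)
        rw [div_le_div_iff₀ ht hs, mul_right_comm, mul_comm (‖⟪z, v⟫_ℂ‖ ^ 2)]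
        gcongr
    _ = ‖r‖ ^ 2 * (1 - ‖z‖ ^ 2) / (1 - ‖r • z‖ ^ 2) * bergmanSq z v := by
        rw [bergmanSq]
        field_simp

end Dilation

section BoundedSchwarzian

variable {E H : Type*} [NormedAddCommGroup E] [InnerProductSpace ℂ E] [FiniteDimensional ℂ E]
  [NormedAddCommGroup H] [NormedSpace ℂ H] {F : E → H} {K : ℝ} {z : E}

/-- `F` is a locally biholomorphic map of the unit ball whose Schwarzian derivative has norm at
most `K` with respect to `bergmanSq`. -/
structure BoundedSchwarzian (K : ℝ) (F : E → H) : Prop where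
  differentiableOn : DifferentiableOn ℂ F (ball 0 1)
  isInvertible_fderiv : ∀ z ∈ ball (0 : E) 1, (fderiv ℂ F z).IsInvertible
  bergmanSq_schwarzian_le : ∀ z ∈ ball (0 : E) 1, ∀ v,
    bergmanSq z (schwarzian ℂ F z v v) ≤ (K * bergmanSq z v) ^ 2

theorem isInvertible_fderiv_ballAut {a : E} (ha : a ∈ ball (0 : E) 1) (hz : z ∈ ball (0 : E) 1) :
    (fderiv ℂ (ballAut a) z).IsInvertible := by
  refine isInvertible_of_forall_eq_zero fun v hv => ?_
  have hiso := bergmanSq_ballAut ha hz v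
  rw [hv, bergmanSq_zero_right] at hiso
  exact eq_zero_of_bergmanSq_eq_zero hz hiso.symm

namespace BoundedSchwarzian

theorem contDiffAt [FiniteDimensional ℂ H] (hF : BoundedSchwarzian K F)
    (hz : z ∈ ball (0 : E) 1) (k : ℕ) : ContDiffAt ℂ k F z :=
  (contDiffOn_of_differentiableOn_complex isOpen_ball hF.differentiableOn k).contDiffAt
    (isOpen_ball.mem_nhds hz)

/- A map with vanishing Schwarzian that distorts the Bergman metric by a factor between `κ ^ 2` and
`κ` does not increase the Schwarzian norm: automorphisms have `κ = 1`, dilations `κ < 1`. -/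
theorem comp [FiniteDimensional ℂ H] (hF : BoundedSchwarzian K F) {φ : E → E}
    (hmaps : MapsTo φ (ball 0 1) (ball 0 1)) (hφ : ∀ z ∈ ball (0 : E) 1, ContDiffAt ℂ 2 φ z)
    (hφ' : ∀ z ∈ ball (0 : E) 1, (fderiv ℂ φ z).IsInvertible)
    (hS : ∀ z ∈ ball (0 : E) 1, schwarzian ℂ φ z = 0)
    {κ : E → ℝ} (hκ : ∀ z ∈ ball (0 : E) 1, 0 < κ z)
    (hlower : ∀ z ∈ ball (0 : E) 1, ∀ v,
      κ z ^ 2 * bergmanSq z v ≤ bergmanSq (φ z) (fderiv ℂ φ z v))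
    (hupper : ∀ z ∈ ball (0 : E) 1, ∀ v,
      bergmanSq (φ z) (fderiv ℂ φ z v) ≤ κ z * bergmanSq z v) :
    BoundedSchwarzian K (F ∘ φ) where
  differentiableOn := hF.differentiableOn.comp
    (fun z hz => ((hφ z hz).differentiableAt (by simp)).differentiableWithinAt) hmaps
  isInvertible_fderiv z hz := by
    rw [fderiv_comp z ((hF.contDiffAt (hmaps hz) 2).differentiableAt (by simp))
      ((hφ z hz).differentiableAt (by simp))]
    exact (hF.isInvertible_fderiv _ (hmaps hz)).comp (hφ' z hz)
  bergmanSq_schwarzian_le z hz v := by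
    have hschw : fderiv ℂ φ z (schwarzian ℂ (F ∘ φ) z v v) =
        schwarzian ℂ F (φ z) (fderiv ℂ φ z v) (fderiv ℂ φ z v) := by
      rw [fderiv_schwarzian_comp (hF.contDiffAt (hmaps hz) 2) (hφ z hz)
        (hF.isInvertible_fderiv _ (hmaps hz)) (hφ' z hz), hS z hz]
      simp
    refine le_of_mul_le_mul_left ?_ (pow_pos (hκ z hz) 2)
    calc κ z ^ 2 * bergmanSq z (schwarzian ℂ (F ∘ φ) z v v)
        ≤ bergmanSq (φ z) (schwarzian ℂ F (φ z) (fderiv ℂ φ z v) (fderiv ℂ φ z v)) :=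
          hschw ▸ hlower z hz _
      _ ≤ (K * bergmanSq (φ z) (fderiv ℂ φ z v)) ^ 2 :=
          hF.bergmanSq_schwarzian_le _ (hmaps hz) _
      _ ≤ K ^ 2 * (κ z * bergmanSq z v) ^ 2 := by
          rw [mul_pow]
          gcongr
          exacts [bergmanSq_nonneg (hmaps hz) _, hupper z hz v]
      _ = κ z ^ 2 * (K * bergmanSq z v) ^ 2 := by ring

theorem comp_ballAut [FiniteDimensional ℂ H] (hF : BoundedSchwarzian K F) {a : E}
    (ha : a ∈ ball (0 : E) 1) : BoundedSchwarzian K (F ∘ ballAut a) := by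
  have hd : ∀ z ∈ ball (0 : E) 1, 1 + innerSL ℂ a z ≠ 0 :=
    fun z hz => one_add_inner_ne_zero (mem_ball_zero_iff.mp ha).le hz
  refine hF.comp (κ := 1) (fun z hz => ballAut_mem_ball ha hz)
    (fun z hz => contDiffAt_fractionalLinear (hd z hz))
    (fun z hz => isInvertible_fderiv_ballAut ha hz)
    (fun z hz => schwarzian_fractionalLinear (hd z hz) (isInvertible_fderiv_ballAut ha hz))
    (fun z _ => one_pos) (fun z hz v => ?_) fun z hz v => ?_
  · simp [bergmanSq_ballAut ha hz]
  · simp [bergmanSq_ballAut ha hz]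

theorem comp_const_smul [FiniteDimensional ℂ H] (hF : BoundedSchwarzian K F) {r : ℂ}
    (hr₀ : r ≠ 0) (hr₁ : ‖r‖ ≤ 1) : BoundedSchwarzian K (F ∘ fun x => r • x) := by
  have hmaps : ∀ z ∈ ball (0 : E) 1, r • z ∈ ball (0 : E) 1 :=
    fun z hz => smul_mem_ball_zero_one hr₁ hz
  refine hF.comp (κ := fun z => ‖r‖ ^ 2 * (1 - ‖z‖ ^ 2) / (1 - ‖r • z‖ ^ 2))
    hmaps (fun z _ => by fun_prop) (fun z _ => isInvertible_fderiv_const_smul hr₀ z)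
    (fun z _ => schwarzian_clm (r • ContinuousLinearMap.id ℂ E) z) (fun z hz => ?_)
    (fun z hz v => ?_) fun z hz v => ?_
  · have hs := sub_pos.mpr (norm_sq_lt_one_of_mem_ball hz)
    have ht := sub_pos.mpr (norm_sq_lt_one_of_mem_ball (hmaps z hz))
    positivity
  · rw [fderiv_const_smul_id]
    exact le_bergmanSq_const_smul hr₁ hz v
  · rw [fderiv_const_smul_id]
    exact bergmanSq_const_smul_le hr₁ hz v

end BoundedSchwarzian

end BoundedSchwarzian

section Polarization

variable {E H : Type*} [NormedAddCommGroup E] [InnerProductSpace ℂ E]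
  [NormedAddCommGroup H] [NormedSpace ℂ H]

theorem norm_apply_apply_le_of_symm {B : E →L[ℂ] E →L[ℂ] H} (hB : ∀ u v, B u v = B v u) {K : ℝ}
    (hK : ∀ v, ‖B v v‖ ≤ K * ‖v‖ ^ 2) (u v : E) : ‖B u v‖ ≤ K * (‖u‖ * ‖v‖) := by
  have hpolar (x y : E) : 2 * ‖B x y‖ ≤ K * (‖x‖ ^ 2 + ‖y‖ ^ 2) := by
    have hsub : (4 : ℂ) • B x y = B (x + y) (x + y) - B (x - y) (x - y) := by
      simp only [map_add, map_sub, add_apply, sub_apply, hB y x]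
      module
    have hnorm : 4 * ‖B x y‖ ≤ K * ‖x + y‖ ^ 2 + K * ‖x - y‖ ^ 2 :=
      calc 4 * ‖B x y‖ = ‖(4 : ℂ) • B x y‖ := by rw [norm_smul]; norm_num
        _ ≤ _ := hsub ▸ (norm_sub_le _ _).trans (add_le_add (hK _) (hK _))
    linear_combination hnorm / 2 + K / 2 * parallelogram_law_with_norm ℂ x y
  rcases eq_or_ne u 0 with rfl | hu
  · simp
  rcases eq_or_ne v 0 with rfl | hv
  · simp
  have hu' := norm_pos_iff.mpr hu
  have hv' := norm_pos_iff.mpr hv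
  have h := hpolar ((‖v‖ : ℂ) • u) ((‖u‖ : ℂ) • v)
  simp only [map_smul, smul_apply, norm_smul, Complex.norm_real, norm_norm] at h
  refine le_of_mul_le_mul_left ?_ (mul_pos hu' hv')
  linear_combination h / 2

theorem norm_clmTrace_le [FiniteDimensional ℂ E] (A : E →L[ℂ] E) :
    ‖clmTrace ℂ E A‖ ≤ Module.finrank ℂ E * ‖A‖ := by
  have hterm (b : E) (hb : ‖b‖ = 1) : ‖⟪b, A b⟫_ℂ‖ ≤ ‖A‖ := by
    simpa [hb] using (norm_inner_le_norm b (A b)).trans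
      (mul_le_mul_of_nonneg_left (A.le_opNorm b) (norm_nonneg b))
  rw [clmTrace_apply, LinearMap.trace_eq_sum_inner _ (stdOrthonormalBasis ℂ E)]
  refine (norm_sum_le_of_le _ fun i _ => hterm _ ((stdOrthonormalBasis ℂ E).norm_eq_one i)).trans ?_
  simp

end Polarization

section EnergyConst

/-- The constant bounding `(∇ω + ω ⊗ ω - ω ∘ S)(u, u)` at the origin, where `ω` is the trace form
and `S` the Schwarzian of a map of Schwarzian norm `K`, in terms of `‖u‖ ^ 2`. Here `n` is the
dimension, and `32 / 9` comes from Cauchy's estimate on the ball of radius `1 / 2`. -/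
def energyConst (n K : ℝ) : ℝ := n * (K ^ 2 + 32 / 9 * K) / (n - 1)

theorem energyConst_nonneg {n K : ℝ} (hn : 1 ≤ n) (hK : 0 ≤ K) : 0 ≤ energyConst n K :=
  div_nonneg (by positivity) (sub_nonneg.mpr hn)

end EnergyConst

namespace BoundedSchwarzian

variable {E H : Type*} [NormedAddCommGroup E] [InnerProductSpace ℂ E] [FiniteDimensional ℂ E]
  [NormedAddCommGroup H] [NormedSpace ℂ H] {F : E → H} {K : ℝ} {z : E}

theorem norm_schwarzian_le (hF : BoundedSchwarzian K F) (hK : 0 ≤ K) (hz : z ∈ ball (0 : E) 1)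
    (v : E) : ‖schwarzian ℂ F z v v‖ ≤ K * bergmanSq z v :=
  (sq_le_sq₀ (norm_nonneg _) (mul_nonneg hK (bergmanSq_nonneg hz v))).mp
    ((norm_sq_le_bergmanSq hz _).trans (hF.bergmanSq_schwarzian_le z hz v))

variable [FiniteDimensional ℂ H]

theorem norm_schwarzian_zero_le (hF : BoundedSchwarzian K F) (hK : 0 ≤ K) (u : E) :
    ‖schwarzian ℂ F 0 u‖ ≤ K * ‖u‖ := by
  have h₀ : (0 : E) ∈ ball (0 : E) 1 := mem_ball_self one_pos
  refine ContinuousLinearMap.opNorm_le_bound _ (by positivity) fun v => ?_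
  rw [mul_assoc]
  refine norm_apply_apply_le_of_symm (schwarzian_comm (hF.contDiffAt h₀ 2)) (fun w => ?_) u v
  rw [← bergmanSq_zero_left]
  exact hF.norm_schwarzian_le hK h₀ w

theorem norm_clmTrace_schwarzian_comp_le (hF : BoundedSchwarzian K F) (hK : 0 ≤ K) (u : E) :
    ‖clmTrace ℂ E (schwarzian ℂ F 0 u ∘L schwarzian ℂ F 0 u)‖ ≤
      Module.finrank ℂ E * K ^ 2 * ‖u‖ ^ 2 :=
  calc _ ≤ Module.finrank ℂ E * (‖schwarzian ℂ F 0 u‖ * ‖schwarzian ℂ F 0 u‖) :=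
        (norm_clmTrace_le _).trans (by gcongr; exact ContinuousLinearMap.opNorm_comp_le _ _)
    _ ≤ Module.finrank ℂ E * ((K * ‖u‖) * (K * ‖u‖)) := by
        gcongr <;> exact hF.norm_schwarzian_zero_le hK u
    _ = _ := by ring

theorem norm_divergence_schwarzian_le (hF : BoundedSchwarzian K F) (hK : 0 ≤ K) (u : E) :
    ‖divergence ℂ (fun x => schwarzian ℂ F x u u) 0‖ ≤
      Module.finrank ℂ E * (32 / 9 * K) * ‖u‖ ^ 2 := by
  have hball : closedBall (0 : E) (1 / 2) ⊆ ball 0 1 := closedBall_subset_ball (by norm_num)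
  have hbound : ∀ x ∈ closedBall (0 : E) (1 / 2),
      ‖schwarzian ℂ F x u u‖ ≤ K * (16 / 9 * ‖u‖ ^ 2) := by
    intro x hx
    have hx' : ‖x‖ ≤ 1 / 2 := mem_closedBall_zero_iff.mp hx
    have hsq : 3 / 4 ≤ 1 - ‖x‖ ^ 2 := by nlinarith [norm_nonneg x]
    calc ‖schwarzian ℂ F x u u‖ ≤ K * (‖u‖ ^ 2 / (1 - ‖x‖ ^ 2) ^ 2) :=
          (hF.norm_schwarzian_le hK (hball hx) u).trans (by gcongr; exact bergmanSq_le (hball hx) u)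
      _ ≤ K * (‖u‖ ^ 2 / (3 / 4) ^ 2) := by gcongr
      _ = K * (16 / 9 * ‖u‖ ^ 2) := by ring
  have hcauchy : ‖fderiv ℂ (fun x => schwarzian ℂ F x u u) 0‖ ≤ K * (16 / 9 * ‖u‖ ^ 2) / (1 / 2) :=
    norm_fderiv_le_div_of_forall_mem_closedBall (by norm_num) (fun x hx =>
      (contDiffAt_schwarzian_apply (k := 1) (by norm_num; exact hF.contDiffAt (hball hx) 3)
        (hF.isInvertible_fderiv x (hball hx)) u u).differentiableAt (by simp)) hbound
  calc _ ≤ Module.finrank ℂ E * (K * (16 / 9 * ‖u‖ ^ 2) / (1 / 2)) := by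
        exact (norm_clmTrace_le _).trans (by gcongr)
    _ = _ := by ring

theorem norm_fderiv_traceForm_add_sub_le (hF : BoundedSchwarzian K F) (hK : 0 ≤ K)
    (hE : 1 < Module.finrank ℂ E) (u : E) :
    ‖fderiv ℂ (traceForm ℂ F) 0 u u + traceForm ℂ F 0 u * traceForm ℂ F 0 u -
      traceForm ℂ F 0 (schwarzian ℂ F 0 u u)‖ ≤
    energyConst (Module.finrank ℂ E) K * ‖u‖ ^ 2 := by
  have h₀ : (0 : E) ∈ ball (0 : E) 1 := mem_ball_self one_pos
  have hpos : (0 : ℝ) < Module.finrank ℂ E - 1 := sub_pos.mpr (by exact_mod_cast hE)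
  have hnorm : ‖(Module.finrank ℂ E - 1 : ℂ)‖ = Module.finrank ℂ E - 1 := by
    simpa using Complex.norm_of_nonneg hpos.le
  rw [energyConst, div_mul_eq_mul_div, le_div_iff₀ hpos, mul_comm, ← hnorm, ← norm_mul,
    finrank_sub_one_mul_fderiv_traceForm (hF.contDiffAt h₀ 3) (hF.isInvertible_fderiv 0 h₀)]
  refine (norm_sub_le_of_le (hF.norm_clmTrace_schwarzian_comp_le hK u)
    (hF.norm_divergence_schwarzian_le hK u)).trans_eq (by ring)

end BoundedSchwarzian

theorem le_add_sqrt_of_sq_sub_one_le {x K c : ℝ} (h : x ^ 2 - 1 ≤ K * x + c) :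
    x ≤ K / 2 + √(1 + K ^ 2 / 4 + c) :=
  sub_le_iff_le_add'.mp (Real.le_sqrt_of_sq_le (by linear_combination h))

section TraceEnergy

variable {E H : Type*} [NormedAddCommGroup E] [InnerProductSpace ℂ E] [FiniteDimensional ℂ E]
  [NormedAddCommGroup H] [NormedSpace ℂ H] {F : E → H} {z a : E}

/-- The vector of `ℂ × E` that is Lorentz dual to the trace form `ω` of `F` at `z`, made homogeneous
as the linear form `(s, v) ↦ s (1 - ω z) + ω v`. -/
def traceVector (F : E → H) (z : E) : ℂ × E :=
  (starRingEnd ℂ (1 - traceForm ℂ F z z), (InnerProductSpace.toDual ℂ E).symm (traceForm ℂ F z))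

/-- The Lorentz norm of the trace vector, scaled to be invariant under automorphisms of the ball;
at the origin it is `‖ω‖ ^ 2 - 1`. -/
def traceEnergy (F : E → H) (z : E) : ℝ :=
  -(1 - ‖z‖ ^ 2) * (lorentz (traceVector F z) (traceVector F z)).re

theorem traceEnergy_eq (F : E → H) (z : E) : traceEnergy F z =
    (1 - ‖z‖ ^ 2) * (‖traceForm ℂ F z‖ ^ 2 - ‖1 - traceForm ℂ F z z‖ ^ 2) := by
  rw [traceEnergy, lorentz_self, Complex.ofReal_re, traceVector, RCLike.norm_conj,
    LinearIsometryEquiv.norm_map]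
  ring

theorem traceEnergy_zero (F : E → H) : traceEnergy F 0 = ‖traceForm ℂ F 0‖ ^ 2 - 1 := by
  simp [traceEnergy_eq]

theorem traceForm_comp_ballAut_apply (ha : a ∈ ball (0 : E) 1) (hz : z ∈ ball (0 : E) 1)
    (hF : ContDiffAt ℂ 2 F (ballAut a z)) (hF' : (fderiv ℂ F (ballAut a z)).IsInvertible) (v : E) :
    (1 + innerSL ℂ a z) * traceForm ℂ (F ∘ ballAut a) z v =
      traceForm ℂ F (ballAut a z) (boostLinear a v) +
        (1 - traceForm ℂ F (ballAut a z) (ballAut a z)) * ⟪a, v⟫_ℂ := by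
  have hd := one_add_inner_ne_zero (mem_ball_zero_iff.mp ha).le hz
  have hinv := isInvertible_fderiv_ballAut ha hz
  rw [traceForm_comp hF (contDiffAt_fractionalLinear hd) hF' hinv, add_apply,
    ContinuousLinearMap.comp_apply, ballAut, fderiv_fractionalLinear_apply hd,
    traceForm_fractionalLinear hd hinv]
  simp only [map_smul, map_sub, smul_apply, smul_eq_mul, innerSL_apply_apply, mul_add]
  rw [innerSL_apply_apply] at hd
  rw [mul_inv_cancel_left₀ hd, mul_inv_cancel_left₀ hd]
  ring

theorem traceVector_comp_ballAut (ha : a ∈ ball (0 : E) 1) (hz : z ∈ ball (0 : E) 1)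
    (hF : ContDiffAt ℂ 2 F (ballAut a z)) (hF' : (fderiv ℂ F (ballAut a z)).IsInvertible) :
    lorentzBoost a (traceVector F (ballAut a z)) =
      starRingEnd ℂ (1 + innerSL ℂ a z) • traceVector (F ∘ ballAut a) z := by
  have hd := one_add_inner_ne_zero (mem_ball_zero_iff.mp ha).le hz
  have htrace := traceForm_comp_ballAut_apply ha hz hF hF'
  have hφ : (1 + innerSL ℂ a z) • ballAut a z = a + boostLinear a z := smul_inv_smul₀ hd _
  ext
  · apply (starRingEnd ℂ).injective
    have hω := congr_arg (traceForm ℂ F (ballAut a z)) hφ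
    simp only [map_smul, map_add, smul_eq_mul] at hω
    simp only [lorentzBoost, traceVector, Prod.smul_fst, smul_eq_mul, map_add, map_mul,
      Complex.conj_conj, inner_conj_symm, InnerProductSpace.toDual_symm_apply]
    rw [mul_sub, htrace z]
    simp only [innerSL_apply_apply] at hω ⊢
    linear_combination -hω
  · refine ext_inner_right ℂ fun v => ?_
    simp only [lorentzBoost, traceVector, Prod.smul_snd, inner_add_left, inner_smul_left,
      Complex.conj_conj, inner_boostLinear_left, InnerProductSpace.toDual_symm_apply, htrace v]
    ring

theorem traceEnergy_comp_ballAut (ha : a ∈ ball (0 : E) 1) (hz : z ∈ ball (0 : E) 1)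
    (hF : ContDiffAt ℂ 2 F (ballAut a z)) (hF' : (fderiv ℂ F (ballAut a z)).IsInvertible) :
    traceEnergy (F ∘ ballAut a) z = traceEnergy F (ballAut a z) := by
  have ha₁ : ‖a‖ ≤ 1 := (mem_ball_zero_iff.mp ha).le
  have hane : 1 - ‖a‖ ^ 2 ≠ 0 := (sub_pos.mpr (norm_sq_lt_one_of_mem_ball ha)).ne'
  have hnorm := one_sub_norm_sq_ballAut ha₁ hz
  have hcast : (1 - ‖a‖ ^ 2 : ℂ) = ((1 - ‖a‖ ^ 2 : ℝ) : ℂ) := by push_cast; rfl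
  have h := congr_arg Complex.re
    (lorentz_lorentzBoost ha₁ (traceVector F (ballAut a z)) (traceVector F (ballAut a z)))
  rw [traceVector_comp_ballAut ha hz hF hF', hcast, Complex.re_ofReal_mul] at h
  have hsmul (c : ℂ) (X : ℂ × E) : (lorentz (c • X) (c • X)).re = ‖c‖ ^ 2 * (lorentz X X).re := by
    simp only [lorentz_self, Complex.ofReal_re, Prod.smul_fst, Prod.smul_snd, norm_smul]
    ring
  rw [hsmul, RCLike.norm_conj] at h
  refine mul_left_cancel₀ hane ?_
  simp only [traceEnergy]
  linear_combination (-(1 - ‖ballAut a z‖ ^ 2)) * h +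
    (lorentz (traceVector (F ∘ ballAut a) z) (traceVector (F ∘ ballAut a) z)).re * hnorm

theorem le_traceEnergy_smul (F : E → H) {t : ℝ} {η : E} (hη : η ≠ 0)
    (ht : 0 ≤ 1 - ‖η‖ ^ 2 * t ^ 2) :
    (1 - ‖η‖ ^ 2 * t ^ 2) * (‖traceForm ℂ F ((t : ℂ) • η) η‖ ^ 2 / ‖η‖ ^ 2 -
      ‖1 - t * traceForm ℂ F ((t : ℂ) • η) η‖ ^ 2) ≤ traceEnergy F ((t : ℂ) • η) := by
  have hnorm : ‖(t : ℂ) • η‖ ^ 2 = ‖η‖ ^ 2 * t ^ 2 := by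
    rw [norm_smul, Complex.norm_real, mul_pow, Real.norm_eq_abs, sq_abs, mul_comm]
  have hop : ‖traceForm ℂ F ((t : ℂ) • η) η‖ ^ 2 / ‖η‖ ^ 2 ≤
      ‖traceForm ℂ F ((t : ℂ) • η)‖ ^ 2 := by
    rw [div_le_iff₀ (by positivity), ← mul_pow]
    exact pow_le_pow_left₀ (norm_nonneg _) (ContinuousLinearMap.le_opNorm _ η) 2
  rw [traceEnergy_eq, hnorm, map_smul, smul_eq_mul]
  exact mul_le_mul_of_nonneg_left (sub_le_sub_right hop _) ht

theorem hasDerivAt_lineEnergy {g : ℝ → ℂ} {D : ℂ} {r : ℝ} (hr : r ≠ 0) (hg : HasDerivAt g D 0)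
    (hg₀ : g 0 = r) :
    HasDerivAt (fun t : ℝ => (1 - r * t ^ 2) * (‖g t‖ ^ 2 / r - ‖1 - t * g t‖ ^ 2))
      (2 * D.re + 2 * r) 0 := by
  have hlin : HasDerivAt (fun t : ℝ => 1 - (t : ℂ) * g t) (-(g 0)) 0 := by
    simpa using ((Complex.ofRealCLM.hasDerivAt (x := (0 : ℝ))).mul hg).const_sub 1
  have hfac : HasDerivAt (fun t : ℝ => 1 - r * t ^ 2) 0 0 := by
    simpa using (((hasDerivAt_id (0 : ℝ)).pow 2).const_mul r).const_sub 1
  refine (hfac.mul ((hg.norm_sq.div_const r).sub hlin.norm_sq)).congr_deriv ?_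
  simp only [hg₀, Complex.inner, Complex.ofReal_zero, zero_mul, sub_zero, zero_add, map_one,
    Complex.conj_ofReal, Complex.re_mul_ofReal]
  field_simp
  simp

/- Restrict the energy to the complex line through the dual of `ω`: the first-order condition at a
maximum is a condition on the derivative of `ω` alone. -/
theorem re_fderiv_traceForm_of_isLocalMax_traceEnergy
    (hω : DifferentiableAt ℂ (traceForm ℂ F) 0) (hmax : IsLocalMax (traceEnergy F) 0) {η : E}
    (hη : traceForm ℂ F 0 = innerSL ℂ η) :
    (fderiv ℂ (traceForm ℂ F) 0 η η).re = -‖η‖ ^ 2 := by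
  rcases eq_or_ne η 0 with rfl | hη₀
  · simp
  set g : ℝ → ℂ := fun t => traceForm ℂ F ((t : ℂ) • η) η
  have hg₀ : g 0 = ((‖η‖ ^ 2 : ℝ) : ℂ) := by
    simp only [g, Complex.ofReal_zero, zero_smul, hη, innerSL_apply_apply,
      inner_self_eq_norm_sq_to_K]
    push_cast; rfl
  have hg : HasDerivAt g (fderiv ℂ (traceForm ℂ F) 0 η η) 0 := by
    have hconst := differentiableAt_const (𝕜 := ℂ) (x := (0 : E)) η
    have h := (hasDerivAt_comp_add_smul (x := 0) (v := η) (t := ((0 : ℝ) : ℂ))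
      (f := fun x => traceForm ℂ F x η) (by simpa using hω.clm_apply hconst)).comp_ofReal
    simpa [g, fderiv_clm_apply hω hconst] using h
  have hline : Tendsto (fun t : ℝ => (t : ℂ) • η) (𝓝 0) (𝓝 0) :=
    (by fun_prop : Continuous fun t : ℝ => (t : ℂ) • η).tendsto' 0 0 (by simp)
  have hsmall : ∀ᶠ t in 𝓝 (0 : ℝ), 0 < 1 - ‖η‖ ^ 2 * t ^ 2 :=
    (by fun_prop : Continuous fun t : ℝ => 1 - ‖η‖ ^ 2 * t ^ 2).continuousAt.eventually_const_lt
      (by simp)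
  have hφmax : IsLocalMax (fun t : ℝ => (1 - ‖η‖ ^ 2 * t ^ 2) *
      (‖g t‖ ^ 2 / ‖η‖ ^ 2 - ‖1 - t * g t‖ ^ 2)) 0 := by
    filter_upwards [hline.eventually hmax, hsmall] with t ht hts
    refine ((le_traceEnergy_smul F hη₀ hts.le).trans ht).trans_eq ?_
    rw [traceEnergy_zero, hη, innerSL_apply_norm, hg₀]
    simp only [Complex.norm_real, norm_pow, norm_norm]
    field_simp
    simp
  linarith [hφmax.hasDerivAt_eq_zero (hasDerivAt_lineEnergy (by positivity) hg hg₀)]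

end TraceEnergy

namespace BoundedSchwarzian

variable {E H : Type*} [NormedAddCommGroup E] [InnerProductSpace ℂ E] [FiniteDimensional ℂ E]
  [NormedAddCommGroup H] [NormedSpace ℂ H] [FiniteDimensional ℂ H] {F : E → H} {K : ℝ}

theorem norm_traceForm_sq_sub_one_le_of_isLocalMax (hF : BoundedSchwarzian K F) (hK : 0 ≤ K)
    (hE : 1 < Module.finrank ℂ E) (hmax : IsLocalMax (traceEnergy F) 0) :
    ‖traceForm ℂ F 0‖ ^ 2 - 1 ≤ K * ‖traceForm ℂ F 0‖ + energyConst (Module.finrank ℂ E) K := by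
  have h₀ : (0 : E) ∈ ball (0 : E) 1 := mem_ball_self one_pos
  obtain ⟨η, hη⟩ : ∃ η : E, innerSL ℂ η = traceForm ℂ F 0 :=
    (InnerProductSpace.toDual ℂ E).surjective _
  have hωη : traceForm ℂ F 0 η = ((‖η‖ ^ 2 : ℝ) : ℂ) := by
    rw [← hη, innerSL_apply_apply, inner_self_eq_norm_sq_to_K]
    push_cast; rfl
  have hre := re_fderiv_traceForm_of_isLocalMax_traceEnergy
    (differentiableAt_traceForm (hF.contDiffAt h₀ 3) (hF.isInvertible_fderiv 0 h₀)) hmax hη.symm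
  have hS : ‖traceForm ℂ F 0 (schwarzian ℂ F 0 η η)‖ ≤ ‖η‖ * (K * ‖η‖ ^ 2) := by
    refine (ContinuousLinearMap.le_opNorm _ _).trans ?_
    rw [← hη, innerSL_apply_norm, ← bergmanSq_zero_left]
    gcongr
    exact hF.norm_schwarzian_le hK h₀ η
  have hstruct := (Complex.re_le_norm _).trans (hF.norm_fderiv_traceForm_add_sub_le hK hE η)
  rw [Complex.sub_re, Complex.add_re, hre, hωη, ← Complex.ofReal_mul, Complex.ofReal_re] at hstruct
  rw [← hη, innerSL_apply_norm]
  rcases eq_or_ne η 0 with rfl | hη₀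
  · have : 0 ≤ energyConst (Module.finrank ℂ E) K :=
      energyConst_nonneg (by exact_mod_cast hE.le) hK
    rw [norm_zero]
    linarith
  · refine le_of_mul_le_mul_right ?_ (by positivity : 0 < ‖η‖ ^ 2)
    linarith [(Complex.re_le_norm _).trans hS]

/- The energy vanishes on the sphere; moving an interior maximum to the origin reduces the
estimate to the previous one. -/
theorem norm_traceForm_zero_le_of_continuousOn (hF : BoundedSchwarzian K F) (hK : 0 ≤ K)
    (hE : 1 < Module.finrank ℂ E) (hcont : ContinuousOn (traceForm ℂ F) (closedBall 0 1)) :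
    ‖traceForm ℂ F 0‖ ≤ K / 2 + √(1 + K ^ 2 / 4 + energyConst (Module.finrank ℂ E) K) := by
  have := FiniteDimensional.proper ℂ E
  have h₀ : (0 : E) ∈ ball (0 : E) 1 := mem_ball_self one_pos
  set R := K / 2 + √(1 + K ^ 2 / 4 + energyConst (Module.finrank ℂ E) K)
  have hR : 1 ≤ R := by
    have hc : 0 ≤ energyConst (Module.finrank ℂ E) K :=
      energyConst_nonneg (by exact_mod_cast hE.le) hK
    exact le_add_of_nonneg_of_le (by positivity) (Real.one_le_sqrt.mpr (by nlinarith))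
  have henergy : ContinuousOn (traceEnergy F) (closedBall 0 1) := by
    simp only [funext (traceEnergy_eq F)]
    have := hcont.clm_apply continuousOn_id
    fun_prop
  obtain ⟨a, ha, hmax⟩ := (isCompact_closedBall (0 : E) 1).exists_isMaxOn
    ⟨0, ball_subset_closedBall h₀⟩ henergy
  suffices traceEnergy F a ≤ R ^ 2 - 1 by
    have hle : traceEnergy F 0 ≤ R ^ 2 - 1 := (hmax (ball_subset_closedBall h₀)).trans this
    rw [traceEnergy_zero] at hle
    exact (sq_le_sq₀ (norm_nonneg _) (by linarith)).mp (by linarith)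
  rcases (mem_closedBall_zero_iff.mp ha).lt_or_eq with ha | ha
  · rw [← mem_ball_zero_iff] at ha
    have hinv : ∀ z ∈ ball (0 : E) 1,
        traceEnergy (F ∘ ballAut a) z = traceEnergy F (ballAut a z) := fun z hz =>
      traceEnergy_comp_ballAut ha hz (hF.contDiffAt (ballAut_mem_ball ha hz) 2)
        (hF.isInvertible_fderiv _ (ballAut_mem_ball ha hz))
    have hlocal : IsLocalMax (traceEnergy (F ∘ ballAut a)) 0 := by
      filter_upwards [isOpen_ball.mem_nhds h₀] with z hz
      rw [hinv z hz, hinv 0 h₀, ballAut_zero]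
      exact hmax (ball_subset_closedBall (ballAut_mem_ball ha hz))
    have hle := le_add_sqrt_of_sq_sub_one_le
      ((hF.comp_ballAut ha).norm_traceForm_sq_sub_one_le_of_isLocalMax hK hE hlocal)
    calc traceEnergy F a = ‖traceForm ℂ (F ∘ ballAut a) 0‖ ^ 2 - 1 := by
          rw [← traceEnergy_zero, hinv 0 h₀, ballAut_zero]
      _ ≤ R ^ 2 - 1 := by gcongr
  · rw [traceEnergy_eq, ha]
    nlinarith

theorem continuousOn_traceForm_comp_const_smul (hF : BoundedSchwarzian K F) {r : ℂ}
    (hr₀ : r ≠ 0) (hr₁ : ‖r‖ < 1) :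
    ContinuousOn (traceForm ℂ (F ∘ fun x => r • x)) (closedBall 0 1) := by
  intro z hz
  have hrz : r • z ∈ ball (0 : E) 1 := by
    rw [mem_ball_zero_iff, norm_smul]
    exact mul_lt_one_of_nonneg_of_lt_one_left (norm_nonneg r) hr₁ (mem_closedBall_zero_iff.mp hz)
  have hFrz : ContDiffAt ℂ 2 F (r • z) := hF.contDiffAt hrz 2
  refine (contDiffAt_traceForm (k := 0) ?_ ?_).continuousAt.continuousWithinAt
  · rw [zero_add]
    exact hFrz.comp z (by fun_prop)
  · rw [fderiv_comp z (hFrz.differentiableAt (by simp)) (by fun_prop)]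
    exact (hF.isInvertible_fderiv _ hrz).comp (isInvertible_fderiv_const_smul hr₀ z)

theorem traceForm_comp_const_smul_zero (hF : BoundedSchwarzian K F) {r : ℂ} (hr : r ≠ 0) :
    traceForm ℂ (F ∘ fun x => r • x) 0 = r • traceForm ℂ F 0 := by
  have h₀ : (r • (0 : E)) ∈ ball (0 : E) 1 := by simp
  have hlin : traceForm ℂ (fun x : E => r • x) 0 = 0 :=
    traceForm_clm (r • ContinuousLinearMap.id ℂ E) 0
  rw [traceForm_comp (hF.contDiffAt h₀ 2) (by fun_prop) (hF.isInvertible_fderiv _ h₀)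
    (isInvertible_fderiv_const_smul hr 0), hlin, fderiv_const_smul_id]
  ext v
  simp

theorem norm_traceForm_zero_le (hF : BoundedSchwarzian K F) (hK : 0 ≤ K)
    (hE : 1 < Module.finrank ℂ E) :
    ‖traceForm ℂ F 0‖ ≤ K / 2 + √(1 + K ^ 2 / 4 + energyConst (Module.finrank ℂ E) K) := by
  have hdil : ∀ r ∈ Ioo (0 : ℝ) 1, r * ‖traceForm ℂ F 0‖ ≤
      K / 2 + √(1 + K ^ 2 / 4 + energyConst (Module.finrank ℂ E) K) := by
    rintro r ⟨hr₀, hr₁⟩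
    have hr : (r : ℂ) ≠ 0 := Complex.ofReal_ne_zero.mpr hr₀.ne'
    have hnorm : ‖(r : ℂ)‖ = r := Complex.norm_of_nonneg hr₀.le
    have h := (hF.comp_const_smul hr (hnorm.trans_le hr₁.le)).norm_traceForm_zero_le_of_continuousOn
      hK hE (hF.continuousOn_traceForm_comp_const_smul hr (hnorm.trans_lt hr₁))
    rwa [hF.traceForm_comp_const_smul_zero hr, norm_smul, hnorm] at h
  have hlim : Tendsto (fun r : ℝ => r * ‖traceForm ℂ F 0‖) (𝓝[<] 1) (𝓝 ‖traceForm ℂ F 0‖) :=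
    ((continuous_mul_const _).tendsto' 1 _ (one_mul _)).mono_left nhdsWithin_le_nhds
  exact le_of_tendsto hlim (eventually_of_mem (Ioo_mem_nhdsLT one_pos) hdil)

end BoundedSchwarzian

section Determinant

variable {𝕜 : Type*} [NontriviallyNormedField 𝕜] {D ι : Type*} [NormedAddCommGroup D]
  [NormedSpace 𝕜 D] [Fintype ι] [DecidableEq ι]

theorem hasFDerivAt_det {A : D → Matrix ι ι 𝕜} {A' : ι → ι → D →L[𝕜] 𝕜} {z : D}
    (hA : ∀ i j, HasFDerivAt (fun x => A x i j) (A' i j) z) :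
    HasFDerivAt (fun x => (A x).det) (∑ i, ∑ j, (A z).adjugate j i • A' i j) z := by
  let detRows : ContinuousMultilinearMap 𝕜 (fun _ : ι => ι → 𝕜) 𝕜 :=
    ⟨(Matrix.detRowAlternating (R := 𝕜) (n := ι)).toMultilinearMap,
      (continuous_id (X := Matrix ι ι 𝕜)).matrix_det⟩
  refine (HasFDerivAt.multilinear_comp (f := detRows) (g := fun i x => A x i)
    fun i => hasFDerivAt_pi.mpr (hA i)).congr_fderiv ?_
  ext v
  simp only [sum_apply, smul_apply, smul_eq_mul, ContinuousLinearMap.comp_apply]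
  refine Finset.sum_congr rfl fun i _ => ?_
  change ((A z).updateRow i fun j => A' i j v).det = _
  rw [Matrix.det_eq_sum_mul_adjugate_row _ i]
  simp only [Matrix.updateRow_self, Matrix.adjugate_apply, Matrix.updateRow_idem, mul_comm]

end Determinant

section Coordinates

variable {n : ℕ} {F : (Fin n → ℂ) → Fin n → ℂ} {z : Fin n → ℂ}

theorem clmTrace_pi (A : (Fin n → ℂ) →L[ℂ] Fin n → ℂ) :
    clmTrace ℂ (Fin n → ℂ) A = ∑ k, A (Pi.single k 1) k := by
  rw [clmTrace_apply, LinearMap.trace_eq_matrix_trace ℂ (Pi.basisFun ℂ (Fin n))]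
  simp [Matrix.trace]

theorem clm_pi_apply_eq_sum {M : Type*} [NormedAddCommGroup M] [NormedSpace ℂ M]
    (A : (Fin n → ℂ) →L[ℂ] M) (v : Fin n → ℂ) : A v = ∑ i, v i • A (Pi.single i 1) := by
  conv_lhs => rw [pi_eq_sum_univ' v, map_sum]
  simp only [map_smul]

theorem jac_mulVec (hF : DifferentiableAt ℂ F z) (v : Fin n → ℂ) :
    (Jac n F z).mulVec v = fderiv ℂ F z v := by
  ext k
  rw [clm_pi_apply_eq_sum, Finset.sum_apply, Matrix.mulVec, dotProduct]
  refine Finset.sum_congr rfl fun j _ => ?_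
  rw [Jac, Matrix.of_apply, pd, fderiv_apply hF, Pi.smul_apply, smul_eq_mul, mul_comm]
  rfl

theorem isInvertible_fderiv_of_jDet_ne_zero (hF : DifferentiableAt ℂ F z) (hz : JDet n F z ≠ 0) :
    (fderiv ℂ F z).IsInvertible :=
  isInvertible_of_forall_eq_zero fun v hv =>
    Matrix.eq_zero_of_mulVec_eq_zero hz ((jac_mulVec hF v).trans hv)

theorem jac_inv_mulVec (hF : DifferentiableAt ℂ F z) (hz : JDet n F z ≠ 0) (v : Fin n → ℂ) :
    (Jac n F z)⁻¹.mulVec v = (fderiv ℂ F z).inverse v := by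
  have hinv := isInvertible_fderiv_of_jDet_ne_zero hF hz
  apply hinv.injective
  rw [hinv.self_apply_inverse, ← jac_mulVec hF, Matrix.mulVec_mulVec,
    Matrix.mul_nonsing_inv _ (isUnit_iff_ne_zero.mpr hz), Matrix.one_mulVec]

theorem hasFDerivAt_pd (hF : ContDiffAt ℂ 2 F z) (j l : Fin n) :
    HasFDerivAt (fun x => pd n j (fun y => F y l) x)
      ((ContinuousLinearMap.proj l).comp ((fderiv ℂ (fderiv ℂ F) z).flip (Pi.single j 1))) z := by
  have hDF : DifferentiableAt ℂ (fderiv ℂ F) z :=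
    (hF.fderiv_right (m := 1) (by norm_num)).differentiableAt (by simp)
  refine (((ContinuousLinearMap.proj l).hasFDerivAt.comp z (hDF.hasFDerivAt.clm_apply
    (hasFDerivAt_const (Pi.single j 1) z))).congr_of_eventuallyEq ?_).congr_fderiv (by simp)
  filter_upwards [hF.eventually (by simp)] with x hx
  rw [pd, fderiv_apply (hx.differentiableAt (by simp))]
  rfl

theorem pd2_eq_fderiv_fderiv (hF : ContDiffAt ℂ 2 F z) (i j l : Fin n) :
    pd2 n i j (fun x => F x l) z =
      fderiv ℂ (fderiv ℂ F) z (Pi.single i 1) (Pi.single j 1) l := by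
  rw [pd2, pd, (hasFDerivAt_pd hF j l).fderiv]
  rfl

theorem sum_pd2_mul_jac_inv (hF : ContDiffAt ℂ 2 F z) (hz : JDet n F z ≠ 0) (i j k : Fin n) :
    ∑ l, pd2 n i j (fun x => F x l) z * (Jac n F z)⁻¹ k l =
      christoffel ℂ F z (Pi.single i 1) (Pi.single j 1) k := by
  rw [christoffel_apply, ← jac_inv_mulVec (hF.differentiableAt (by simp)) hz]
  simp only [Matrix.mulVec, dotProduct, pd2_eq_fderiv_fderiv hF, mul_comm]

theorem pd_jDet_div_jDet (hF : ContDiffAt ℂ 2 F z) (hz : JDet n F z ≠ 0) (i : Fin n) :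
    pd n i (JDet n F) z / JDet n F z =
      -(n + 1) * traceForm ℂ F z (Pi.single i 1) := by
  have hdet : HasFDerivAt (JDet n F) _ z := hasFDerivAt_det fun l k => hasFDerivAt_pd hF k l
  have hinv : (Jac n F z)⁻¹ = (JDet n F z)⁻¹ • (Jac n F z).adjugate := by
    rw [Matrix.inv_def, Ring.inverse_eq_inv', JDet]
  have htrace := clmTrace_christoffel ℂ F z (Pi.single i 1)
  rw [Module.finrank_fin_fun] at htrace
  rw [← htrace, clmTrace_pi, pd, hdet.fderiv, div_eq_inv_mul, sum_apply, Finset.mul_sum]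
  simp only [← sum_pd2_mul_jac_inv hF hz, pd2_eq_fderiv_fderiv hF, hinv, Matrix.smul_apply,
    sum_apply, smul_apply, Finset.mul_sum, smul_eq_mul]
  rw [Finset.sum_comm]
  refine Finset.sum_congr rfl fun k _ => Finset.sum_congr rfl fun l _ => ?_
  rw [mul_comm (fderiv ℂ (fderiv ℂ F) z _ _ _), mul_assoc]
  rfl

theorem oSchw_eq_schwarzian (hF : ContDiffAt ℂ 2 F z) (hz : JDet n F z ≠ 0) (i j k : Fin n) :
    oSchw n F i j k z = schwarzian ℂ F z (Pi.single i 1) (Pi.single j 1) k := by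
  have hn : (n + 1 : ℂ) ≠ 0 := Nat.cast_add_one_ne_zero n
  rw [oSchw, sum_pd2_mul_jac_inv hF hz, pd_jDet_div_jDet hF hz, pd_jDet_div_jDet hF hz,
    schwarzian_apply]
  simp only [Pi.add_apply, Pi.smul_apply, Pi.single_apply, smul_eq_mul]
  field_simp
  ring

theorem schwOp_eq_schwarzian (hF : ContDiffAt ℂ 2 F z) (hz : JDet n F z ≠ 0) (v : Fin n → ℂ) :
    SchwOp n F z v = schwarzian ℂ F z v v := by
  ext k
  rw [clm_pi_apply_eq_sum (schwarzian ℂ F z) v, sum_apply, Finset.sum_apply, SchwOp]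
  refine Finset.sum_congr rfl fun i _ => ?_
  rw [smul_apply, clm_pi_apply_eq_sum, Finset.smul_sum, Finset.sum_apply]
  refine Finset.sum_congr rfl fun j _ => ?_
  rw [oSchw_eq_schwarzian hF hz, Pi.smul_apply, Pi.smul_apply, smul_eq_mul, smul_eq_mul]
  ring

theorem sum_pd2_mul_of_jac_eq_one (hF : ContDiffAt ℂ 2 F 0) (hJ : Jac n F 0 = 1) (w : Fin n → ℂ) :
    ∑ i, ∑ j, pd2 n i j (fun x => F x j) 0 * w i = -(n + 1) * traceForm ℂ F 0 w := by
  have hdet : JDet n F 0 ≠ 0 := by simp [JDet, hJ]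
  have hΓ (i j k : Fin n) : pd2 n i j (fun x => F x k) 0 =
      christoffel ℂ F 0 (Pi.single i 1) (Pi.single j 1) k := by
    simp [← sum_pd2_mul_jac_inv hF hdet, hJ, Matrix.one_apply]
  have htrace := clmTrace_christoffel ℂ F 0
  simp only [Module.finrank_fin_fun, clmTrace_pi] at htrace
  simp only [hΓ, ← Finset.sum_mul, htrace]
  rw [clm_pi_apply_eq_sum, Finset.mul_sum]
  exact Finset.sum_congr rfl fun i _ => by rw [smul_eq_mul]; ring

end Coordinates

section Euclidean

variable {n : ℕ} {z : EuclideanSpace ℂ (Fin n)}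

theorem euclNorm_ofLp (z : EuclideanSpace ℂ (Fin n)) : euclNorm n z.ofLp = ‖z‖ :=
  (EuclideanSpace.norm_eq z).symm

theorem ofLp_mem_eball : z.ofLp ∈ eball n ↔ z ∈ ball 0 1 := by
  rw [eball, mem_ofPred_eq, euclNorm_ofLp, mem_ball_zero_iff]

theorem isOpen_eball : IsOpen (eball n) :=
  isOpen_lt (by unfold euclNorm; fun_prop) continuous_const

theorem bergSq_ofLp (z v : EuclideanSpace ℂ (Fin n)) :
    bergSq n z.ofLp v.ofLp = (n + 1) * bergmanSq z v := by
  have hinner : ∑ i, starRingEnd ℂ (z i) * v i = ⟪z, v⟫_ℂ := by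
    simp [PiLp.inner_apply, mul_comm]
  have hnorm : ∑ i, v i * starRingEnd ℂ (v i) = (‖v‖ ^ 2 : ℝ) := by
    simp [EuclideanSpace.norm_sq_eq, Complex.mul_conj']
  set s : ℝ := 1 - ‖z‖ ^ 2 with hs
  have hterm (i j : Fin n) : ((n : ℂ) + 1) / (s : ℂ) ^ 2 *
      ((if i = j then (s : ℂ) else 0) + starRingEnd ℂ (z i) * z j) * v i * starRingEnd ℂ (v j) =
        ((n : ℂ) + 1) / (s : ℂ) ^ 2 * (if i = j then s * (v i * starRingEnd ℂ (v j)) else 0) +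
          ((n : ℂ) + 1) / (s : ℂ) ^ 2 * ((starRingEnd ℂ (z i) * v i) *
            starRingEnd ℂ (starRingEnd ℂ (z j) * v j)) := by
    rw [map_mul, Complex.conj_conj]
    split_ifs <;> ring
  rw [bergSq, euclNorm_ofLp, ← hs]
  simp only [hterm, Finset.sum_add_distrib, ← Finset.mul_sum, ← Finset.sum_mul, Finset.sum_ite_eq,
    Finset.mem_univ, if_true, ← map_sum, hinner, hnorm]
  rw [Complex.mul_conj', bergmanSq, ← hs, ← Complex.ofReal_re ((n + 1) * _)]
  congr 1
  push_cast
  ring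

/-- The identity map from Euclidean space to `ℂⁿ` with its sup norm. -/
def ofLpEquiv (n : ℕ) : EuclideanSpace ℂ (Fin n) ≃L[ℂ] (Fin n → ℂ) :=
  PiLp.continuousLinearEquiv 2 ℂ fun _ => ℂ

end Euclidean

section Family

variable {n : ℕ} {α : ℝ} {F : (Fin n → ℂ) → Fin n → ℂ}

theorem memF.contDiffAt (hF : memF n α F) {z : Fin n → ℂ} (hz : z ∈ eball n) :
    ContDiffAt ℂ 2 F z :=
  (contDiffOn_of_differentiableOn_complex isOpen_eball hF.1 2).contDiffAt
    (isOpen_eball.mem_nhds hz)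

theorem memF.isInvertible_fderiv (hF : memF n α F) {z : Fin n → ℂ} (hz : z ∈ eball n) :
    (fderiv ℂ F z).IsInvertible :=
  isInvertible_fderiv_of_jDet_ne_zero ((hF.contDiffAt hz).differentiableAt (by simp)) (hF.2.1 z hz)

theorem memF.bergmanSq_schwarzian_le (hF : memF n α F) (hα : 0 ≤ α)
    {z : EuclideanSpace ℂ (Fin n)} (hz : z ∈ ball 0 1) (v : EuclideanSpace ℂ (Fin n)) :
    bergmanSq z (schwarzian ℂ (F ∘ ofLpEquiv n) z v v) ≤ (√(n + 1) * α * bergmanSq z v) ^ 2 := by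
  have hz' := ofLp_mem_eball.mpr hz
  have hnonneg := bergmanSq_nonneg hz v
  rcases hnonneg.eq_or_lt with hv | hv
  · simp [eq_zero_of_bergmanSq_eq_zero hz hv.symm, bergmanSq_zero_right]
  set b : ℝ := (n + 1) * bergmanSq z v with hb
  have hb₀ : 0 < b := by positivity
  set c : ℂ := (√b)⁻¹ with hc
  have hcb : ‖c‖ ^ 2 = b⁻¹ := by
    rw [hc, norm_inv, Complex.norm_real, Real.norm_of_nonneg (Real.sqrt_nonneg b), inv_pow,
      Real.sq_sqrt hb₀.le]
  have hunit : bergSq n z.ofLp (c • v).ofLp = 1 := by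
    rw [bergSq_ofLp, bergmanSq_smul, hcb, mul_left_comm, ← hb, inv_mul_cancel₀ hb₀.ne']
  have hschw : (schwarzian ℂ (F ∘ ofLpEquiv n) z (c • v) (c • v)).ofLp =
      schwarzian ℂ F z.ofLp (c • v).ofLp (c • v).ofLp :=
    schwarzian_comp_equiv (L := ofLpEquiv n) (hF.contDiffAt hz') (hF.isInvertible_fderiv hz') _ _
  have hbound := hF.2.2.2.2 _ hz' _ hunit
  rw [schwOp_eq_schwarzian (hF.contDiffAt hz') (hF.2.1 _ hz'), ← hschw, bergSq_ofLp,
    Real.sqrt_le_left hα] at hbound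
  simp only [map_smul, smul_apply, smul_smul, bergmanSq_smul, norm_mul, mul_pow, hcb] at hbound
  rw [mul_pow, mul_pow, Real.sq_sqrt (by positivity)]
  have hn : (0 : ℝ) < n + 1 := by positivity
  refine le_of_mul_le_mul_left ?_ hn
  rw [show (n + 1 : ℝ) * ((n + 1) * α ^ 2 * bergmanSq z v ^ 2) = α ^ 2 * b ^ 2 by rw [hb]; ring,
    ← div_le_iff₀ (by positivity)]
  refine le_of_eq_of_le ?_ hbound
  field_simp

theorem memF.boundedSchwarzian (hF : memF n α F) (hα : 0 ≤ α) :
    BoundedSchwarzian (√(n + 1) * α) (F ∘ ofLpEquiv n) where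
  differentiableOn := hF.1.comp (ofLpEquiv n).differentiableOn fun _ hz => ofLp_mem_eball.mpr hz
  isInvertible_fderiv z hz := by
    have hz' : ofLpEquiv n z ∈ eball n := ofLp_mem_eball.mpr hz
    rw [fderiv_comp z ((hF.contDiffAt hz').differentiableAt (by simp))
      (ofLpEquiv n).differentiableAt, (ofLpEquiv n).fderiv]
    exact (hF.isInvertible_fderiv hz').comp ⟨ofLpEquiv n, rfl⟩
  bergmanSq_schwarzian_le _ hz v := hF.bergmanSq_schwarzian_le hα hz v

theorem memF.sum_pd2_mul (hF : memF n α F) (w : EuclideanSpace ℂ (Fin n)) :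
    ∑ i, ∑ j, pd2 n i j (fun z => F z j) 0 * w i =
      -(n + 1) * traceForm ℂ (F ∘ ofLpEquiv n) 0 w := by
  have h0 : (0 : Fin n → ℂ) ∈ eball n := ofLp_mem_eball.mpr (mem_ball_self one_pos)
  have h0' : ofLpEquiv n 0 ∈ eball n := by rwa [map_zero]
  rw [traceForm_comp_equiv (hF.contDiffAt h0') (hF.isInvertible_fderiv h0'), map_zero]
  exact sum_pd2_mul_of_jac_eq_one (hF.contDiffAt h0) hF.2.2.2.1 _

end Family

theorem energyConst_sqrt_mul_le {n : ℕ} (hn : 2 ≤ n) {α : ℝ} (hα : 0 ≤ α) :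
    energyConst n (√(n + 1) * α) ≤
      (4 * (n : ℝ) ^ 2 + 2 * n - 2 + ((n : ℝ) + 1) / (n - 1)) * α ^ 2 +
        (4 * √(n + 1) + 8 * √(n + 1) / (n - 1)) * α := by
  have hn' : (2 : ℝ) ≤ n := by exact_mod_cast hn
  have hn₁ : (0 : ℝ) < n - 1 := by linarith
  have hquad : (n : ℝ) * (n + 1) / (n - 1) ≤ 4 * n ^ 2 + 2 * n - 2 + (n + 1) / (n - 1) := by
    rw [show (n : ℝ) * (n + 1) / (n - 1) = n + 1 + (n + 1) / (n - 1) by field_simp; ring]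
    gcongr
    nlinarith
  have hlin : 32 / 9 * n / (n - 1) ≤ 4 + 8 / ((n : ℝ) - 1) := by
    rw [show 4 + 8 / ((n : ℝ) - 1) = (4 * n + 4) / (n - 1) by field_simp; ring]
    gcongr
    linarith
  calc energyConst n (√(n + 1) * α)
      = n * (n + 1) / (n - 1) * α ^ 2 + 32 / 9 * n / (n - 1) * (√(n + 1) * α) := by
        rw [energyConst, mul_pow, Real.sq_sqrt (by positivity)]
        ring
    _ ≤ (4 * (n : ℝ) ^ 2 + 2 * n - 2 + ((n : ℝ) + 1) / (n - 1)) * α ^ 2 +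
          (4 + 8 / (n - 1)) * (√(n + 1) * α) := by gcongr
    _ = _ := by ring

end

/-- Theorem 3.4: the trace order of `F_α` satisfies
`ord F_α ≤ (1/2)(n+1)((1/2)√(n+1)α + √(1 + (1/4)(n+1)α² + C(n,α)))`, where
`C(n,α) = (4n²+2n−2+(n+1)/(n−1))α² + (4√(n+1)+8√(n+1)/(n−1))α`; equivalently, every
`F ∈ F_α` and every unit vector `w` satisfy the corresponding bound on
`(1/2)|Σ_{i,j} ∂²f_j/∂z_i∂z_j(0)w_i|`. -/
theorem stmt_13 (n : ℕ) (hn : 2 ≤ n) (α : ℝ) (hα : 0 ≤ α)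
    (F : (Fin n → ℂ) → (Fin n → ℂ)) (hF : memF n α F)
    (w : Fin n → ℂ) (hw : euclNorm n w = 1) :
    (1 / 2) * ‖∑ i, ∑ j, pd2 n i j (fun z => F z j) 0 * w i‖ ≤
      (1 / 2) * ((n : ℝ) + 1) * ((1 / 2) * Real.sqrt ((n : ℝ) + 1) * α
        + Real.sqrt (1 + (1 / 4) * ((n : ℝ) + 1) * α ^ 2 +
          ((4 * (n : ℝ) ^ 2 + 2 * (n : ℝ) - 2 + ((n : ℝ) + 1) / ((n : ℝ) - 1)) * α ^ 2
            + (4 * Real.sqrt ((n : ℝ) + 1)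
              + 8 * Real.sqrt ((n : ℝ) + 1) / ((n : ℝ) - 1)) * α))) := by
  set w' : EuclideanSpace ℂ (Fin n) := WithLp.toLp 2 w
  set ω := traceForm ℂ (F ∘ ofLpEquiv n) 0
  have hω : ‖ω w'‖ ≤ ‖ω‖ := ω.unit_le_opNorm _ ((euclNorm_ofLp w').symm.trans hw).le
  have hmain := (hF.boundedSchwarzian hα).norm_traceForm_zero_le (by positivity)
    (by rwa [finrank_euclideanSpace_fin])
  have hK : (√((n : ℝ) + 1) * α) ^ 2 = (n + 1) * α ^ 2 := by
    rw [mul_pow, Real.sq_sqrt (by positivity)]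
  rw [finrank_euclideanSpace_fin, hK] at hmain
  rw [hF.sum_pd2_mul w', norm_mul, norm_neg, ← Nat.cast_add_one, Complex.norm_natCast,
    Nat.cast_add_one, ← mul_assoc]
  gcongr
  calc ‖ω w'‖ ≤ _ := hω.trans hmain
    _ ≤ _ := by
      gcongr ?_ + √(1 + ?_ + ?_)
      · exact (by ring : _ = _).le
      · exact (by ring : _ = _).le
      · exact energyConst_sqrt_mul_le hn hα

end
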